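/- arXiv:1709.08651 — 2 statements merged into one kernel-verified Lean document; each statement's English description precedes it below -/
import Mathlib

section
/- Suppose ξ = 2πω with ω ∈ (0, 1/2) irrational. Fix an integer ℓ ≥ 0 and δ ≠ 0, assume D(ℓ) > 0, and let A < B with −D(ℓ) ≤ A and B ≤ D(ℓ). Then, for every choice, for each series length n, of a unit eigenvector u_n of H(δ)H(δ)ᵀ corresponding to its largest eigenvalue, (1/N)·Σ_{n=ℓ+1}^{N+ℓ} 1_{(A,B)}(r_{n−1−ℓ}(n)/δ) → ∫_A^B du/(π·√(D(ℓ)² − u²)) as N → ∞, where r_{n−1−ℓ}(n) is the reconstruction error at index n−1−ℓ for the series of length n. -/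
open Filter Matrix

/-- Hankelization (diagonal averaging): the `j`-th value is the average of the
entries `Y i k` with `i + k = j`. -/
noncomputable def hankelize {L K : ℕ} (Y : Matrix (Fin L) (Fin K) ℝ) (j : ℕ) : ℝ :=
  (∑ i : Fin L, ∑ k : Fin K, if (i : ℕ) + (k : ℕ) = j then Y i k else 0) /
  (∑ i : Fin L, ∑ k : Fin K, if (i : ℕ) + (k : ℕ) = j then (1 : ℝ) else 0)

/-- The `L × K` Hankel (trajectory) matrix of a series `x`. -/
noncomputable def hankelOf (x : ℕ → ℝ) (L K : ℕ) : Matrix (Fin L) (Fin K) ℝ :=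
  Matrix.of fun i k => x ((i : ℕ) + (k : ℕ))

/-- Squared Euclidean norm of a vector. -/
noncomputable def normSq {M : ℕ} (w : Fin M → ℝ) : ℝ := ∑ i, w i ^ 2

/-- `u` is a unit eigenvector of `A` corresponding to its largest eigenvalue. -/
def IsTopEigenvector {L : ℕ} (A : Matrix (Fin L) (Fin L) ℝ) (u : Fin L → ℝ) : Prop :=
  normSq u = 1 ∧ ∃ μ : ℝ, A.mulVec u = μ • u ∧
    ∀ (ν : ℝ) (v : Fin L → ℝ), v ≠ 0 → A.mulVec v = ν • v → ν ≤ μ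

/-- The exponential signal `x_n = a^n`. -/
noncomputable def expSignal (a : ℝ) : ℕ → ℝ := fun n => a ^ n

/-- The harmonic noise `e_n = cos (ξ n + φ)`. -/
noncomputable def cosNoise (ξ φ : ℝ) : ℕ → ℝ := fun n => Real.cos (ξ * (n : ℝ) + φ)

/-- The vector `W_M = (1, a, …, a^{M-1})ᵀ`. -/
noncomputable def Wvec (a : ℝ) (M : ℕ) : Fin M → ℝ := fun i => a ^ (i : ℕ)

/-- `ρ_j = (𝒮(P₀ E Hᵀ S₀ H))_j + (𝒮(P₀⊥ E))_j`. -/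
noncomputable def rho (a ξ φ : ℝ) (L K : ℕ) (j : ℕ) : ℝ :=
  let H := hankelOf (expSignal a) L K
  let E := hankelOf (cosNoise ξ φ) L K
  let P0perp : Matrix (Fin L) (Fin L) ℝ :=
    (normSq (Wvec a L))⁻¹ • Matrix.vecMulVec (Wvec a L) (Wvec a L)
  let P0 : Matrix (Fin L) (Fin L) ℝ := 1 - P0perp
  let S0 : Matrix (Fin L) (Fin L) ℝ :=
    ((normSq (Wvec a L)) ^ 2 * normSq (Wvec a K))⁻¹ • Matrix.vecMulVec (Wvec a L) (Wvec a L)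
  hankelize (P0 * E * Hᵀ * S0 * H) j + hankelize (P0perp * E) j

/-- The matrix `H(δ)H(δ)ᵀ` for the perturbed series `a^n + δ cos(ξ n + φ)`. -/
noncomputable def HdeltaSq (a ξ φ δ : ℝ) (L K : ℕ) : Matrix (Fin L) (Fin L) ℝ :=
  let Hδ := hankelOf (expSignal a) L K + δ • hankelOf (cosNoise ξ φ) L K
  Hδ * Hδᵀ

/-- The SSA reconstruction error `r_j = (𝒮(u uᵀ H(δ)))_j - a^j`. -/
noncomputable def recErr (a ξ φ δ : ℝ) (L K : ℕ) (u : Fin L → ℝ) (j : ℕ) : ℝ :=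
  hankelize (Matrix.vecMulVec u u *
    (hankelOf (expSignal a) L K + δ • hankelOf (cosNoise ξ φ) L K)) j - a ^ j

/-- `G(a,ξ) = (a²-1)/(a(a²+1-2a cos ξ))`. -/
noncomputable def Gfun (a ξ : ℝ) : ℝ := (a ^ 2 - 1) / (a * (a ^ 2 + 1 - 2 * a * Real.cos ξ))

/-- The coefficient `C₁(ℓ)`. -/
noncomputable def C1 (a ξ : ℝ) (ℓ : ℕ) : ℝ :=
  (2 / (1 + (ℓ : ℝ))) * (a * Real.cos ((ℓ : ℝ) * ξ) - a ^ (-(ℓ : ℤ)) * Real.cos ξ)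
  - (a ^ 2 + 1 - 2 * a * Real.cos ξ - 2 * Real.sin ξ ^ 2) * Gfun a ξ * a ^ (-(ℓ : ℤ))

/-- The coefficient `C₂(ℓ)`. -/
noncomputable def C2 (a ξ : ℝ) (ℓ : ℕ) : ℝ :=
  (2 / (1 + (ℓ : ℝ))) * (a * Real.sin ((ℓ : ℝ) * ξ) + a ^ (-(ℓ : ℤ)) * Real.sin ξ)
  - 2 * Real.sin ξ * (a - Real.cos ξ) * Gfun a ξ * a ^ (-(ℓ : ℤ))

/-- `D(ℓ) = G(a,ξ)·√(C₁(ℓ)² + C₂(ℓ)²)`. -/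
noncomputable def Dfun (a ξ : ℝ) (ℓ : ℕ) : ℝ :=
  Gfun a ξ * Real.sqrt (C1 a ξ ℓ ^ 2 + C2 a ξ ℓ ^ 2)


section helpers
open Topology MeasureTheory


instance factTwoPi : Fact ((0:ℝ) < 2 * Real.pi) := ⟨Real.two_pi_pos⟩

theorem weyl_fourier (ξ β : ℝ) (hξ : ∀ m : ℤ, m ≠ 0 → ∀ k : ℤ, (m:ℝ) * ξ ≠ k * (2 * Real.pi)) (m : ℤ) :
    Tendsto (fun N : ℕ => (1 / (N:ℂ)) * ∑ n ∈ Finset.range N,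
      fourier m (((ξ * n + β : ℝ)) : AddCircle (2 * Real.pi))) atTop
      (𝓝 (∫ x, fourier m x ∂(AddCircle.haarAddCircle (T := 2 * Real.pi)))) := by
  by_cases hm : m = 0
  · subst hm
    simp only [fourier_zero, Finset.sum_const, Finset.card_range, nsmul_eq_mul, mul_one, integral_const, probReal_univ, one_smul]
    apply tendsto_const_nhds.congr'
    filter_upwards [eventually_gt_atTop 0] with N hN
    have : (N:ℂ) ≠ 0 := by exact_mod_cast hN.ne'
    field_simp
  have h0 : ∫ x, fourier m x ∂(AddCircle.haarAddCircle (T := 2 * Real.pi)) = 0 :=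
    integral_eq_zero_of_add_right_eq_neg (μ := AddCircle.haarAddCircle)
      (fourier_add_half_inv_index hm Real.two_pi_pos)
  rw [h0]
  set r : ℂ := Complex.exp (Complex.I * (m * ξ)) with hr
  have hr1 : r ≠ 1 := by
    rw [hr, Ne, Complex.exp_eq_one_iff]
    rintro ⟨k, hk⟩
    apply hξ m hm k
    have : (Complex.I * (m * ξ)) = Complex.I * (k * (2 * Real.pi)) := by rw [hk]; ring
    have := mul_left_cancel₀ Complex.I_ne_zero this
    exact_mod_cast this
  have hsum : ∀ N : ℕ, ∑ n ∈ Finset.range N, fourier m (((ξ * n + β : ℝ)) : AddCircle (2 * Real.pi))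
      = Complex.exp (Complex.I * (m * β)) * ((r ^ N - 1) / (r - 1)) := by
    intro N
    rw [← geom_sum_eq hr1, Finset.mul_sum]
    refine Finset.sum_congr rfl fun n _ => ?_
    rw [fourier_coe_apply, hr, ← Complex.exp_nat_mul, ← Complex.exp_add]
    congr 1
    have : (Real.pi : ℂ) ≠ 0 := by exact_mod_cast Real.pi_ne_zero
    push_cast
    field_simp
    ring
  have hrn : ‖r‖ = 1 := by
    rw [hr, mul_comm]; exact_mod_cast Complex.norm_exp_ofReal_mul_I (m * ξ)
  have hen : ‖Complex.exp (Complex.I * (m * β))‖ = 1 := by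
    rw [mul_comm]; exact_mod_cast Complex.norm_exp_ofReal_mul_I (m * β)
  refine squeeze_zero_norm (a := fun N : ℕ => (2 / ‖r - 1‖) * (1 / (N:ℝ))) ?_ ?_
  · intro N
    rw [hsum, norm_mul, norm_mul, hen, one_mul, norm_div, norm_div, norm_one, Complex.norm_natCast, mul_comm]
    gcongr
    calc ‖r ^ N - 1‖ ≤ ‖r ^ N‖ + ‖(1:ℂ)‖ := norm_sub_le _ _
      _ = 2 := by rw [norm_pow, hrn]; norm_num
  · simpa using (tendsto_one_div_atTop_nhds_zero_nat (𝕜 := ℝ)).const_mul (2 / ‖r - 1‖)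

theorem weyl_cont (ξ β : ℝ) (hξ : ∀ m : ℤ, m ≠ 0 → ∀ k : ℤ, (m:ℝ) * ξ ≠ k * (2 * Real.pi))
    (F : C(AddCircle (2 * Real.pi), ℂ)) :
    Tendsto (fun N : ℕ => (1 / (N:ℂ)) * ∑ n ∈ Finset.range N,
      F (((ξ * n + β : ℝ)) : AddCircle (2 * Real.pi))) atTop
      (𝓝 (∫ x, F x ∂(AddCircle.haarAddCircle (T := 2 * Real.pi)))) := by
  have hintg : ∀ F : C(AddCircle (2 * Real.pi), ℂ), Integrable F (AddCircle.haarAddCircle (T := 2 * Real.pi)) :=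
    fun F => F.continuous.integrable_of_hasCompactSupport (HasCompactSupport.of_compactSpace _)
  have hspan : ∀ G ∈ Submodule.span ℂ (Set.range (@fourier (2 * Real.pi))),
      Tendsto (fun N : ℕ => (1 / (N:ℂ)) * ∑ n ∈ Finset.range N,
      G (((ξ * n + β : ℝ)) : AddCircle (2 * Real.pi))) atTop
      (𝓝 (∫ x, G x ∂(AddCircle.haarAddCircle (T := 2 * Real.pi)))) := by
    intro G hG
    induction hG using Submodule.span_induction with
    | mem x h => obtain ⟨m, rfl⟩ := h; exact weyl_fourier ξ β hξ m
    | zero => simp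
    | add x y _ _ hx hy =>
      simp only [ContinuousMap.add_apply, Finset.sum_add_distrib, mul_add]
      rw [integral_add (hintg x) (hintg y)]
      exact hx.add hy
    | smul c x _ hx =>
      simp only [ContinuousMap.smul_apply, smul_eq_mul, ← Finset.mul_sum]
      rw [integral_const_mul]
      refine (hx.const_mul c).congr fun N => ?_
      ring
  have hF : F ∈ (Submodule.span ℂ (Set.range (@fourier (2 * Real.pi)))).topologicalClosure := by
    rw [span_fourier_closure_eq_top]; trivial
  rw [← SetLike.mem_coe, Submodule.topologicalClosure_coe, Metric.mem_closure_iff] at hF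
  rw [Metric.tendsto_atTop]
  intro ε hε
  obtain ⟨G, hG, hFG⟩ := hF (ε / 4) (by positivity)
  obtain ⟨N0, hN0⟩ := Metric.tendsto_atTop.1 (hspan G hG) (ε / 4) (by positivity)
  have hpt : ∀ x, ‖F x - G x‖ ≤ ε / 4 := fun x => by
    rw [dist_eq_norm] at hFG
    exact ((F - G).norm_coe_le_norm x).trans hFG.le
  refine ⟨N0, fun N hN => ?_⟩
  have h1 := hN0 N hN
  rw [dist_eq_norm] at h1 ⊢
  have h2 : ‖(1 / (N:ℂ)) * ∑ n ∈ Finset.range N, F (((ξ * n + β : ℝ)) : AddCircle (2 * Real.pi))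
     - (1 / (N:ℂ)) * ∑ n ∈ Finset.range N, G (((ξ * n + β : ℝ)) : AddCircle (2 * Real.pi))‖ ≤ ε / 4 := by
    rw [← mul_sub, ← Finset.sum_sub_distrib, norm_mul, norm_div, norm_one, Complex.norm_natCast]
    calc _ ≤ 1 / (N:ℝ) * (N * (ε / 4)) := by
          gcongr
          refine (norm_sum_le_of_le _ fun n _ => hpt _).trans ?_
          simp
      _ ≤ ε / 4 := by
          rcases Nat.eq_zero_or_pos N with h | h
          · subst h; simp; positivity
          · have : (N:ℝ) ≠ 0 := by positivity
            field_simp; rfl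
  have h3 : ‖(∫ x, F x ∂(AddCircle.haarAddCircle (T := 2 * Real.pi))) - ∫ x, G x ∂(AddCircle.haarAddCircle (T := 2 * Real.pi))‖ ≤ ε / 4 := by
    rw [← integral_sub (hintg F) (hintg G)]
    refine (norm_integral_le_of_norm_le_const (C := ε / 4) (Eventually.of_forall hpt)).trans ?_
    simp
  rw [norm_sub_rev] at h3
  have := norm_add₃_le (a := (1 / (N:ℂ)) * ∑ n ∈ Finset.range N, F (((ξ * n + β : ℝ)) : AddCircle (2 * Real.pi))
     - (1 / (N:ℂ)) * ∑ n ∈ Finset.range N, G (((ξ * n + β : ℝ)) : AddCircle (2 * Real.pi)))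
     (b := (1 / (N:ℂ)) * ∑ n ∈ Finset.range N, G (((ξ * n + β : ℝ)) : AddCircle (2 * Real.pi)) - ∫ x, G x ∂(AddCircle.haarAddCircle (T := 2 * Real.pi)))
     (c := (∫ x, G x ∂(AddCircle.haarAddCircle (T := 2 * Real.pi))) - ∫ x, F x ∂(AddCircle.haarAddCircle (T := 2 * Real.pi)))
  rw [sub_add_sub_cancel, sub_add_sub_cancel] at this
  linarith

/-- Weyl for even functions. -/
theorem weyl_cos (ξ β D : ℝ) (hξ : ∀ m : ℤ, m ≠ 0 → ∀ k : ℤ, (m:ℝ) * ξ ≠ k * (2 * Real.pi))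
    (f : ℝ → ℝ) (hf : Continuous f) :
    Tendsto (fun N : ℕ => (1 / (N:ℝ)) * ∑ n ∈ Finset.range N, f (D * Real.cos (ξ * n + β))) atTop
      (𝓝 ((1 / Real.pi) * ∫ t in (0:ℝ)..Real.pi, f (D * Real.cos t))) := by
  have hper : Function.Periodic (fun t : ℝ => ((f (D * Real.cos t) : ℝ) : ℂ)) (2 * Real.pi) := by
    intro t; simp
  have hlift : Continuous hper.lift := by
    refine continuous_coinduced_dom.2 ?_
    change Continuous (fun t : ℝ => hper.lift (t : AddCircle (2 * Real.pi)))
    simp only [Function.Periodic.lift_coe]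
    fun_prop
  have := weyl_cont ξ β hξ ⟨hper.lift, hlift⟩
  simp only [ContinuousMap.coe_mk, Function.Periodic.lift_coe] at this
  rw [AddCircle.integral_haarAddCircle, ← AddCircle.intervalIntegral_preimage (2 * Real.pi) 0] at this
  simp only [Function.Periodic.lift_coe, zero_add] at this
  have hii : ∀ a b : ℝ, IntervalIntegrable (fun t : ℝ => f (D * Real.cos t)) volume a b :=
    fun a b => Continuous.intervalIntegrable (by fun_prop) a b
  have hfold : ∫ t in (0:ℝ)..(2 * Real.pi), f (D * Real.cos t) = 2 * ∫ t in (0:ℝ)..Real.pi, f (D * Real.cos t) := by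
    rw [← intervalIntegral.integral_add_adjacent_intervals (hii 0 Real.pi) (hii Real.pi (2 * Real.pi))]
    have h := intervalIntegral.integral_comp_sub_left (a := Real.pi) (b := 2 * Real.pi) (fun t : ℝ => f (D * Real.cos t)) (2 * Real.pi)
    simp only [Real.cos_two_pi_sub, sub_self] at h
    rw [show 2 * Real.pi - Real.pi = Real.pi by ring] at h
    rw [h]; ring
  rw [intervalIntegral.integral_ofReal, hfold] at this
  have h2 := (Complex.continuous_re.tendsto _).comp this
  convert h2 using 1
  · ext N
    simp only [Function.comp]
    rw [show (1 / (N:ℂ)) * ∑ n ∈ Finset.range N, ((f (D * Real.cos (ξ * n + β)) : ℝ) : ℂ) = (((1 / (N:ℝ)) * ∑ n ∈ Finset.range N, f (D * Real.cos (ξ * n + β)) : ℝ) : ℂ) by push_cast; rfl]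
    exact (Complex.ofReal_re _).symm
  · congr 1
    rw [Complex.real_smul, ← Complex.ofReal_mul, Complex.ofReal_re]
    have := Real.pi_ne_zero
    field_simp


theorem arcsine_integral (D A B : ℝ) (hD : 0 < D) (hAB : A < B) (hA : -D ≤ A) (hB : B ≤ D) :
    ∫ x in A..B, 1 / (Real.pi * Real.sqrt (D ^ 2 - x ^ 2)) =
      (Real.arccos (A / D) - Real.arccos (B / D)) / Real.pi := by
  have hcont : Continuous (fun x : ℝ => - Real.arccos (x / D) / Real.pi) := by
    have := Real.continuous_arccos
    fun_prop
  have hder : ∀ x ∈ Set.Ioo A B, HasDerivAt (fun x : ℝ => - Real.arccos (x / D) / Real.pi)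
      (1 / (Real.pi * Real.sqrt (D ^ 2 - x ^ 2))) x := by
    intro x hx
    have h1 : x / D ≠ -1 := by
      intro h; rw [div_eq_iff hD.ne'] at h; linarith [hx.1]
    have h2 : x / D ≠ 1 := by
      intro h; rw [div_eq_iff hD.ne'] at h; linarith [hx.2]
    have := (((Real.hasDerivAt_arccos h1 h2).comp x ((hasDerivAt_id x).div_const D)).neg).div_const Real.pi
    refine this.congr_deriv ?_
    have hs : Real.sqrt (1 - (x / D) ^ 2) = Real.sqrt (D ^ 2 - x ^ 2) / D := by
      rw [show 1 - (x / D) ^ 2 = (D ^ 2 - x ^ 2) / D ^ 2 by field_simp, Real.sqrt_div', Real.sqrt_sq hD.le]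
      positivity
    rw [hs]
    have hpos : 0 < Real.sqrt (D ^ 2 - x ^ 2) := by
      apply Real.sqrt_pos.2; nlinarith [hx.1, hx.2]
    have := Real.pi_pos
    field_simp
  have hintg : IntervalIntegrable (fun x => 1 / (Real.pi * Real.sqrt (D ^ 2 - x ^ 2))) volume A B := by
    refine intervalIntegral.intervalIntegrable_deriv_of_nonneg hcont.continuousOn ?_ ?_
    · rw [min_eq_left hAB.le, max_eq_right hAB.le]; exact hder
    · intro x _
      have := Real.pi_pos
      positivity
  rw [intervalIntegral.integral_eq_sub_of_hasDerivAt_of_le hAB.le hcont.continuousOn hder hintg]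
  ring

/-- the arcsine law -/
noncomputable def arcLaw (D : ℝ) : Measure ℝ :=
  Measure.map (fun t => D * Real.cos t) (ENNReal.ofReal (1 / Real.pi) • volume.restrict (Set.Ioc 0 Real.pi))

theorem arcLaw_prob (D : ℝ) : IsProbabilityMeasure (arcLaw D) := by
  constructor
  rw [arcLaw, Measure.map_apply (by fun_prop) MeasurableSet.univ]
  simp only [Set.preimage_univ, Measure.smul_apply, smul_eq_mul, Measure.restrict_apply_univ, Real.volume_Ioc]
  rw [← ENNReal.ofReal_mul (by have := Real.pi_pos; positivity)]
  have := Real.pi_ne_zero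
  simp [this]

theorem arcLaw_integral (D : ℝ) (f : ℝ → ℝ) (hf : Continuous f) :
    ∫ x, f x ∂(arcLaw D) = (1 / Real.pi) * ∫ t in (0:ℝ)..Real.pi, f (D * Real.cos t) := by
  rw [arcLaw, integral_map (by fun_prop) hf.aestronglyMeasurable, integral_smul_measure,
    intervalIntegral.integral_of_le Real.pi_pos.le, ENNReal.toReal_ofReal (by have := Real.pi_pos; positivity), smul_eq_mul]

theorem arcLaw_frontier (D A B : ℝ) (hD : 0 < D) (hAB : A < B) :
    arcLaw D (frontier (Set.Ioo A B)) = 0 := by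
  rw [frontier_Ioo hAB, arcLaw, Measure.map_apply (by fun_prop) (by measurability)]
  rw [Measure.smul_apply, Measure.restrict_apply ((by fun_prop : Measurable (fun t => D * Real.cos t)) (by measurability))]
  have : ((fun t => D * Real.cos t) ⁻¹' {A, B} ∩ Set.Ioc 0 Real.pi) ⊆ {Real.arccos (A / D), Real.arccos (B / D)} := by
    rintro t ⟨ht, h0, h1⟩
    simp only [Set.mem_preimage, Set.mem_insert_iff, Set.mem_singleton_iff] at ht ⊢
    rcases ht with h | h
    · left; rw [← h, mul_div_cancel_left₀ _ hD.ne', Real.arccos_cos h0.le h1]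
    · right; rw [← h, mul_div_cancel_left₀ _ hD.ne', Real.arccos_cos h0.le h1]
  rw [measure_mono_null this (Set.Finite.measure_zero (by simp) _)]
  simp

theorem arcLaw_Ioo (D A B : ℝ) (hD : 0 < D) (hAB : A < B) (hA : -D ≤ A) (hB : B ≤ D) :
    (arcLaw D (Set.Ioo A B)).toReal = (Real.arccos (A / D) - Real.arccos (B / D)) / Real.pi := by
  rw [arcLaw, Measure.map_apply (by fun_prop) (by measurability)]
  rw [Measure.smul_apply, Measure.restrict_apply ((by fun_prop : Measurable (fun t => D * Real.cos t)) (by measurability))]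
  have hA' : -1 ≤ A / D := by rw [le_div_iff₀ hD]; linarith
  have hB' : B / D ≤ 1 := by rw [div_le_iff₀ hD]; linarith
  have hAB' : A / D < B / D := by gcongr
  have : ((fun t => D * Real.cos t) ⁻¹' (Set.Ioo A B) ∩ Set.Ioc 0 Real.pi) = Set.Ioo (Real.arccos (B / D)) (Real.arccos (A / D)) := by
    ext t
    simp only [Set.mem_inter_iff, Set.mem_preimage, Set.mem_Ioo, Set.mem_Ioc]
    constructor
    · rintro ⟨⟨h1, h2⟩, h3, h4⟩
      rw [← Real.arccos_cos h3.le h4]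
      constructor
      · apply Real.arccos_lt_arccos (Real.neg_one_le_cos t) _ hB'
        rw [lt_div_iff₀ hD]; linarith
      · apply Real.arccos_lt_arccos hA' _ (Real.cos_le_one t)
        rw [div_lt_iff₀ hD]; linarith
    · rintro ⟨h1, h2⟩
      have h3 : 0 < t := (Real.arccos_nonneg _).trans_lt h1
      have h4 : t < Real.pi := h2.trans_le (Real.arccos_le_pi _)
      refine ⟨⟨?_, ?_⟩, h3, h4.le⟩
      · have := Real.cos_lt_cos_of_nonneg_of_le_pi h3.le (Real.arccos_le_pi _) h2
        rw [Real.cos_arccos hA' (by linarith), div_lt_iff₀ hD] at this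
        linarith
      · have := Real.cos_lt_cos_of_nonneg_of_le_pi (Real.arccos_nonneg _) h4.le h1
        rw [Real.cos_arccos (by linarith) hB', lt_div_iff₀ hD] at this
        linarith
  rw [this, Real.volume_Ioo, smul_eq_mul, ENNReal.toReal_mul, ENNReal.toReal_ofReal (by have := Real.pi_pos; positivity),
    ENNReal.toReal_ofReal]
  · ring
  · rw [sub_nonneg]; exact Real.arccos_le_arccos hAB'.le

theorem arcsine_law (ξ β D A B : ℝ) (hξ : ∀ m : ℤ, m ≠ 0 → ∀ k : ℤ, (m:ℝ) * ξ ≠ k * (2 * Real.pi))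
    (hD : 0 < D) (hAB : A < B) (hA : -D ≤ A) (hB : B ≤ D) (Y : ℕ → ℝ)
    (hY : Tendsto (fun n => Y n - D * Real.cos (ξ * n + β)) atTop (𝓝 0)) :
    Tendsto (fun N : ℕ => (1 / (N:ℝ)) * ∑ n ∈ Finset.range N, (Set.Ioo A B).indicator (fun _ => (1:ℝ)) (Y n))
      atTop (𝓝 (∫ x in A..B, 1 / (Real.pi * Real.sqrt (D ^ 2 - x ^ 2)))) := by
  rw [arcsine_integral D A B hD hAB hA hB, ← arcLaw_Ioo D A B hD hAB hA hB]
  -- empirical measures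
  have hfin : ∀ N : ℕ, ∀ s, MeasurableSet s → (((N + 1 : ℕ) : ENNReal)⁻¹ • ∑ n ∈ Finset.range (N + 1), Measure.dirac (Y n)) s
      = ENNReal.ofReal ((1 / ((N + 1 : ℕ):ℝ)) * ∑ n ∈ Finset.range (N + 1), s.indicator (fun _ => (1:ℝ)) (Y n)) := by
    intro N s hs
    rw [Measure.smul_apply, Measure.finsetSum_apply, ENNReal.ofReal_mul (by positivity), ENNReal.ofReal_sum_of_nonneg]
    · rw [smul_eq_mul, one_div, ENNReal.ofReal_inv_of_pos (by positivity), ENNReal.ofReal_natCast]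
      congr 1
      refine Finset.sum_congr rfl fun n _ => ?_
      rw [Measure.dirac_apply' _ hs]
      by_cases h : Y n ∈ s <;> simp [h]
    · intro n _
      exact Set.indicator_nonneg (by simp) _
  let P : ℕ → ProbabilityMeasure ℝ := fun N =>
    ⟨((N + 1 : ℕ) : ENNReal)⁻¹ • ∑ n ∈ Finset.range (N + 1), Measure.dirac (Y n), ⟨by
      rw [hfin N _ MeasurableSet.univ]
      have : (N:ℝ) + 1 ≠ 0 := by positivity
      simp [this]⟩⟩
  let Q : ProbabilityMeasure ℝ := ⟨arcLaw D, arcLaw_prob D⟩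
  have hPQ : Tendsto P atTop (𝓝 Q) := by
    rw [ProbabilityMeasure.tendsto_iff_forall_integral_tendsto]
    intro f
    change Tendsto (fun N => ∫ x, f x ∂(((N + 1 : ℕ) : ENNReal)⁻¹ • ∑ n ∈ Finset.range (N + 1), Measure.dirac (Y n))) atTop (𝓝 (∫ x, f x ∂(arcLaw D)))
    rw [arcLaw_integral D f f.continuous]
    have h1 : Tendsto (fun n : ℕ => f (Y n) - f (D * Real.cos (ξ * n + β))) atTop (𝓝 0) := by
      have hu : UniformContinuousOn f (Metric.closedBall 0 (D + 1)) :=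
        (isCompact_closedBall _ _).uniformContinuousOn_of_continuous f.continuous.continuousOn
      rw [Metric.uniformContinuousOn_iff] at hu
      rw [Metric.tendsto_atTop] at hY ⊢
      intro ε hε
      obtain ⟨η, hη, h⟩ := hu ε hε
      obtain ⟨N0, hN0⟩ := hY (min η 1) (by positivity)
      refine ⟨N0, fun n hn => ?_⟩
      have h2 := hN0 n hn
      rw [dist_zero_right, lt_min_iff, Real.norm_eq_abs] at h2
      have h3 : |D * Real.cos (ξ * n + β)| ≤ D := by
        rw [abs_mul, abs_of_pos hD]
        exact mul_le_of_le_one_right hD.le (Real.abs_cos_le_one _)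
      rw [dist_zero_right, ← dist_eq_norm]
      apply h
      · rw [mem_closedBall_zero_iff, Real.norm_eq_abs]
        have := abs_add_le (Y n - D * Real.cos (ξ * n + β)) (D * Real.cos (ξ * n + β))
        rw [sub_add_cancel] at this
        linarith [h2.2]
      · rw [mem_closedBall_zero_iff, Real.norm_eq_abs]; linarith
      · rw [Real.dist_eq]; exact h2.1
    have h2 := (h1.cesaro.add (by simpa only [one_div] using weyl_cos ξ β D hξ f f.continuous)).comp (tendsto_add_atTop_nat 1)
    rw [zero_add] at h2
    simp only [one_div]
    refine h2.congr fun N => ?_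
    rw [integral_smul_measure, integral_finsetSum_measure]
    · simp only [integral_dirac, Function.comp, smul_eq_mul, ENNReal.toReal_inv, ENNReal.toReal_natCast, Finset.sum_sub_distrib]
      ring
    · intro n _
      exact integrable_dirac (by simp)
  have h := ProbabilityMeasure.tendsto_measure_of_null_frontier_of_tendsto' hPQ (E := Set.Ioo A B) (arcLaw_frontier D A B hD hAB)
  have h' := (ENNReal.tendsto_toReal (measure_ne_top (Q : Measure ℝ) (Set.Ioo A B))).comp h
  rw [← tendsto_add_atTop_iff_nat 1]
  refine h'.congr fun N => ?_
  change ((((N + 1 : ℕ) : ENNReal)⁻¹ • ∑ n ∈ Finset.range (N + 1), Measure.dirac (Y n)) (Set.Ioo A B)).toReal = _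
  rw [hfin N _ measurableSet_Ioo, ENNReal.toReal_ofReal]
  refine mul_nonneg (by positivity) (Finset.sum_nonneg fun n _ => Set.indicator_nonneg (by simp) _)


set_option maxHeartbeats 2000000 in
theorem perturb {V W : Type*} [NormedAddCommGroup V] [InnerProductSpace ℝ V]
    [NormedAddCommGroup W] [InnerProductSpace ℝ W]
    (E : W →ₗ[ℝ] V) (E' : V →ₗ[ℝ] W) (hadj : ∀ x y, inner ℝ (E x) y = inner ℝ x (E' y))
    (η σ : ℝ) (hη : 0 ≤ η) (hσ : 0 < σ) (hησ : 2 * η ≤ σ)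
    (hE : ∀ x, ‖E x‖ ≤ η * ‖x‖) (hE' : ∀ x, ‖E' x‖ ≤ η * ‖x‖)
    (w : V) (z : W) (hw : ‖w‖ = 1) (hz : ‖z‖ = 1) (u : V) (hu : ‖u‖ = 1) (v : W)
    (hv : v = (σ * inner ℝ w u) • z + E' u) (μ : ℝ)
    (hTv : (σ * inner ℝ z v) • w + E v = μ • u)
    (hμ : (σ - η) ^ 2 ≤ μ) (e : V) (f : W) (he : ‖e‖ = 1) (hf : ‖f‖ = 1) :
    |inner ℝ e u * inner ℝ f v - σ * (inner ℝ e w * inner ℝ f z)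
      - (inner ℝ e w * inner ℝ f (E' w) + inner ℝ e (E z) * inner ℝ f z
        - inner ℝ e w * inner ℝ f z * inner ℝ w (E z))| ≤ 100 * (η ^ 2 / σ) := by
  set c : ℝ := inner ℝ w u with hc
  set s : V := u - c • w with hs
  have hww : inner ℝ w w = (1:ℝ) := by rw [real_inner_self_eq_norm_sq, hw]; norm_num
  have huu : inner ℝ u u = (1:ℝ) := by rw [real_inner_self_eq_norm_sq, hu]; norm_num
  have hzz : inner ℝ z z = (1:ℝ) := by rw [real_inner_self_eq_norm_sq, hz]; norm_num
  have hcs : ∀ (x y : V), ‖x‖ = 1 → |inner ℝ x y| ≤ ‖y‖ := fun x y hx => by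
    simpa [hx] using abs_real_inner_le_norm x y
  have hcs' : ∀ (x y : W), ‖x‖ = 1 → |inner ℝ x y| ≤ ‖y‖ := fun x y hx => by
    simpa [hx] using abs_real_inner_le_norm x y
  have hc1 : |c| ≤ 1 := by simpa [hu] using hcs w u hw
  have hσμ : σ ^ 2 / 4 ≤ μ := by nlinarith
  have hμ0 : 0 < μ := by nlinarith
  -- ‖v‖² = μ
  have hvv : inner ℝ v v = μ := by
    have h1 : inner ℝ ((σ * inner ℝ z v) • w + E v) u = μ := by
      rw [hTv, inner_smul_left, huu]; simp
    rw [inner_add_left, inner_smul_left, hadj] at h1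
    have h2 : inner ℝ v v = inner ℝ ((σ * c) • z + E' u) v := congrArg (fun x => inner ℝ x v) hv
    rw [h2, inner_add_left, inner_smul_left, ← h1, real_inner_comm v (E' u)]
    simp [hc]; ring
  have hvn : ‖v‖ ^ 2 = μ := by rw [← real_inner_self_eq_norm_sq, hvv]
  have hvpos : σ / 2 ≤ ‖v‖ := by
    by_contra h
    push Not at h
    nlinarith [norm_nonneg v]
  -- projection
  let Q : V → V := fun x => x - (inner ℝ w x : ℝ) • w
  have hQn : ∀ x, ‖Q x‖ ≤ 2 * ‖x‖ := fun x => by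
    refine (norm_sub_le _ _).trans ?_
    rw [norm_smul, hw, mul_one, Real.norm_eq_abs]
    linarith [hcs w x hw]
  have hsQ : μ • s = Q (E v) := by
    have h1 : μ * c = σ * inner ℝ z v + inner ℝ w (E v) := by
      have := congrArg (fun x => inner ℝ w x) hTv
      simp only [inner_add_right, inner_smul_right, hww] at this
      rw [hc]; linarith
    simp only [Q, hs, smul_sub, smul_smul]
    rw [← hTv, h1, add_smul]; abel
  have hsn : ‖s‖ ≤ 4 * (η / σ) := by
    have h1 : μ * ‖s‖ ≤ 2 * (η * ‖v‖) := by
      have := congrArg norm hsQ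
      rw [norm_smul, Real.norm_eq_abs, abs_of_pos hμ0] at this
      rw [this]; refine (hQn _).trans ?_
      linarith [hE v]
    have hv0 : 0 < ‖v‖ := by linarith
    have h2 : ‖v‖ * ‖s‖ ≤ 2 * η := by
      rw [← hvn] at h1
      by_contra h
      push Not at h
      nlinarith
    rw [show 4 * (η / σ) = 4 * η / σ by ring, le_div_iff₀ hσ]
    nlinarith [norm_nonneg s]
  have hc2 : 1 - c ^ 2 = ‖s‖ ^ 2 := by
    rw [← real_inner_self_eq_norm_sq, hs, inner_sub_left, inner_sub_right, inner_sub_right,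
      inner_smul_left, inner_smul_right, inner_smul_left, inner_smul_right, huu, hww, real_inner_comm w u, ← hc]
    simp; ring
  -- the error in cσ s
  have hEu : ‖E' u‖ ≤ η := by simpa [hu] using hE' u
  have hEw : ‖E' w‖ ≤ η := by simpa [hw] using hE' w
  have hEz : ‖E z‖ ≤ η := by simpa [hz] using hE z
  have hμc : |c ^ 2 * σ ^ 2 - μ| ≤ 2 * σ * η + η ^ 2 := by
    have h1 : μ = c ^ 2 * σ ^ 2 + 2 * (c * σ * inner ℝ z (E' u)) + ‖E' u‖ ^ 2 := by
      rw [← hvv, hv, inner_add_left, inner_add_right, inner_add_right, inner_smul_left, inner_smul_right, inner_smul_left, inner_smul_right, hzz, real_inner_self_eq_norm_sq, real_inner_comm z (E' u)]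
      simp; ring
    have h2 : |c * σ * inner ℝ z (E' u)| ≤ σ * η := by
      rw [abs_mul, abs_mul, abs_of_pos hσ]
      calc |c| * σ * |inner ℝ z (E' u)| ≤ 1 * σ * η := by
            gcongr
            exact (hcs' z _ hz).trans hEu
        _ = _ := by ring
    have h3 : ‖E' u‖ ^ 2 ≤ η ^ 2 := by gcongr
    rw [abs_le] at h2 ⊢
    constructor <;> nlinarith [sq_nonneg ‖E' u‖]
  have hQadd : ∀ x y, Q (x + y) = Q x + Q y := fun x y => by
    simp only [Q, inner_add_right, add_smul]; abel
  have hQsmul : ∀ (r : ℝ) x, Q (r • x) = r • Q x := fun r x => by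
    simp only [Q, inner_smul_right, smul_sub, smul_smul]
  have hd : μ • ((c * σ) • s - Q (E z)) = (c ^ 2 * σ ^ 2 - μ) • Q (E z) + (c * σ) • Q (E (E' u)) := by
    have h1 : Q (E v) = (σ * c) • Q (E z) + Q (E (E' u)) := by
      rw [hv, map_add, map_smul, hQadd, hQsmul]
    rw [smul_sub, smul_comm, hsQ, h1, smul_add, smul_smul, sub_smul]
    rw [show c * σ * (σ * c) = c ^ 2 * σ ^ 2 by ring]; abel
  have hdn : ‖(c * σ) • s - Q (E z)‖ ≤ 28 * (η ^ 2 / σ) := by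
    have h1 := congrArg norm hd
    rw [norm_smul, Real.norm_eq_abs, abs_of_pos hμ0] at h1
    have h2 : ‖(c ^ 2 * σ ^ 2 - μ) • Q (E z) + (c * σ) • Q (E (E' u))‖ ≤ (2 * σ * η + η ^ 2) * (2 * η) + (1 * σ) * (2 * (η * η)) := by
      refine (norm_add_le _ _).trans ?_
      rw [norm_smul, norm_smul, Real.norm_eq_abs, Real.norm_eq_abs, abs_mul, abs_of_pos hσ]
      gcongr
      · exact (hQn _).trans (by linarith)
      · refine (hQn _).trans ?_
        have := hE (E' u)
        nlinarith
    have h3 : (2 * σ * η + η ^ 2) * (2 * η) + (1 * σ) * (2 * (η * η)) ≤ 7 * σ * η ^ 2 := by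
      nlinarith [mul_le_mul_of_nonneg_left hησ (sq_nonneg η)]
    rw [show 28 * (η ^ 2 / σ) = 28 * η ^ 2 / σ by ring, le_div_iff₀ hσ]
    have h4 : σ ^ 2 / 4 * ‖(c * σ) • s - Q (E z)‖ ≤ 7 * σ * η ^ 2 := by
      calc _ ≤ μ * ‖(c * σ) • s - Q (E z)‖ := by gcongr
        _ ≤ _ := by rw [h1]; exact h2.trans h3
    by_contra h
    push Not at h
    nlinarith
  -- assemble
  have hu' : u = c • w + s := by rw [hs]; abel
  have hev : inner ℝ e u = c * inner ℝ e w + inner ℝ e s := by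
    conv_lhs => rw [hu']
    rw [inner_add_right, inner_smul_right]
  have hfE : inner ℝ f (E' u) = c * inner ℝ f (E' w) + inner ℝ f (E' s) := by
    conv_lhs => rw [hu']
    rw [map_add, map_smul, inner_add_right, inner_smul_right]
  have hfv : inner ℝ f v = c * σ * inner ℝ f z + inner ℝ f (E' u) := by
    conv_lhs => rw [hv]
    rw [inner_add_right, inner_smul_right]; ring
  have heQ : inner ℝ e ((c * σ) • s - Q (E z)) = c * σ * inner ℝ e s - (inner ℝ e (E z) - inner ℝ w (E z) * inner ℝ e w) := by
    simp only [Q, inner_sub_right, inner_smul_right]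
  have key : inner ℝ e u * inner ℝ f v - σ * (inner ℝ e w * inner ℝ f z)
      - (inner ℝ e w * inner ℝ f (E' w) + inner ℝ e (E z) * inner ℝ f z
        - inner ℝ e w * inner ℝ f z * inner ℝ w (E z))
      = -(‖s‖ ^ 2 * σ * (inner ℝ e w * inner ℝ f z))
        + (-(‖s‖ ^ 2 * (inner ℝ e w * inner ℝ f (E' w))) + (c * (inner ℝ e w * inner ℝ f (E' s))
        + (inner ℝ e s * inner ℝ f (E' u) + inner ℝ e ((c * σ) • s - Q (E z)) * inner ℝ f z))) := by
    rw [heQ, hev, hfv, ← hc2, hfE]; ring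
  rw [key]
  have b1 := hcs e w he
  rw [hw] at b1
  have b2 := hcs' f z hf
  rw [hz] at b2
  have b3 := (hcs' f (E' w) hf).trans hEw
  have b4 : |inner ℝ f (E' s)| ≤ η * (4 * (η / σ)) :=
    (hcs' f (E' s) hf).trans ((hE' s).trans (by gcongr))
  have b5 := (hcs e s he).trans hsn
  have b6 := (hcs' f (E' u) hf).trans hEu
  have b7 := (hcs e _ he).trans hdn
  have hs2 : ‖s‖ ^ 2 ≤ (4 * (η / σ)) ^ 2 := by gcongr
  have hq : η / σ ≤ 1 / 2 := by rw [div_le_iff₀ hσ]; linarith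
  have hq0 : 0 ≤ η / σ := by positivity
  have e1 : (4 * (η / σ)) ^ 2 * σ * (1 * 1) = 16 * (η ^ 2 / σ) := by field_simp; ring
  have e2 : (4 * (η / σ)) ^ 2 * (1 * η) ≤ 8 * (η ^ 2 / σ) := by
    have : (4 * (η / σ)) ^ 2 * (1 * η) = 16 * (η / σ) * (η ^ 2 / σ) := by field_simp; ring
    rw [this]
    have : 0 ≤ η ^ 2 / σ := by positivity
    nlinarith
  have e3 : η * (4 * (η / σ)) = 4 * (η ^ 2 / σ) := by ring
  have t1 : |-(‖s‖ ^ 2 * σ * (inner ℝ e w * inner ℝ f z))| ≤ (4 * (η / σ)) ^ 2 * σ * (1 * 1) := by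
    rw [abs_neg, abs_mul, abs_mul, abs_mul, abs_of_pos hσ, abs_of_nonneg (sq_nonneg _)]; gcongr
  have t2 : |-(‖s‖ ^ 2 * (inner ℝ e w * inner ℝ f (E' w)))| ≤ (4 * (η / σ)) ^ 2 * (1 * η) := by
    rw [abs_neg, abs_mul, abs_mul, abs_of_nonneg (sq_nonneg _)]; gcongr
  have t3 : |c * (inner ℝ e w * inner ℝ f (E' s))| ≤ 1 * (1 * (η * (4 * (η / σ)))) := by
    rw [abs_mul, abs_mul]; gcongr
  have t4 : |inner ℝ e s * inner ℝ f (E' u)| ≤ (4 * (η / σ)) * η := by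
    rw [abs_mul]; gcongr
  have t5 : |inner ℝ e ((c * σ) • s - Q (E z)) * inner ℝ f z| ≤ (28 * (η ^ 2 / σ)) * 1 := by
    rw [abs_mul]; gcongr
  have hpos : 0 ≤ η ^ 2 / σ := by positivity
  refine (abs_add_le _ _).trans ?_
  refine (add_le_add_right ((abs_add_le _ _).trans (add_le_add_right ((abs_add_le _ _).trans (add_le_add_right (abs_add_le _ _) _)) _)) _).trans ?_
  linarith

theorem rayleigh_le {L : ℕ} (A : Matrix (Fin L) (Fin L) ℝ) (hA : A.IsHermitian) (μ : ℝ)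
    (h : ∀ (ν : ℝ) (v : Fin L → ℝ), v ≠ 0 → A.mulVec v = ν • v → ν ≤ μ) (x : Fin L → ℝ) :
    x ⬝ᵥ (A *ᵥ x) ≤ μ * (x ⬝ᵥ x) := by
  have hB : (μ • (1 : Matrix (Fin L) (Fin L) ℝ) - A).IsHermitian := by
    apply Matrix.IsHermitian.sub _ hA
    simp [Matrix.IsHermitian]
  have hpsd : (μ • (1 : Matrix (Fin L) (Fin L) ℝ) - A).PosSemidef := by
    rw [hB.posSemidef_iff_eigenvalues_nonneg]
    intro j
    have h1 := hB.mulVec_eigenvectorBasis j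
    have h2 : (hB.eigenvectorBasis j : Fin L → ℝ) ≠ 0 := by
      intro h0
      have h3 := hB.eigenvectorBasis.orthonormal.1 j
      have : hB.eigenvectorBasis j = 0 := by
        ext i; exact congrFun h0 i
      rw [this, norm_zero] at h3
      norm_num at h3
    have h3 := h (μ - hB.eigenvalues j) _ h2 (by
      rw [Matrix.sub_mulVec, Matrix.smul_mulVec, Matrix.one_mulVec] at h1
      rw [sub_smul, ← h1]; abel)
    simp only [Pi.zero_apply]
    linarith
  have := hpsd.dotProduct_mulVec_nonneg x
  rw [Matrix.sub_mulVec, Matrix.smul_mulVec, Matrix.one_mulVec, dotProduct_sub, dotProduct_smul] at this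
  simp only [star_trivial, smul_eq_mul] at this
  linarith

theorem frob_bound {L K : ℕ} (M : Matrix (Fin L) (Fin K) ℝ) (η : ℝ) (hη : 0 ≤ η)
    (hM : ∑ i, ∑ k, M i k ^ 2 ≤ η ^ 2) (x : EuclideanSpace ℝ (Fin K)) :
    ‖Matrix.toEuclideanLin M x‖ ≤ η * ‖x‖ := by
  refine abs_le_of_sq_le_sq' ?_ (by positivity) |>.2
  rw [mul_pow, EuclideanSpace.real_norm_sq_eq, EuclideanSpace.real_norm_sq_eq]
  calc _ ≤ ∑ i, (∑ k, M i k ^ 2) * ∑ k, x k ^ 2 := by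
        refine Finset.sum_le_sum fun i _ => ?_
        have : (Matrix.toEuclideanLin M x) i = ∑ k, M i k * x k := rfl
        rw [this]
        exact Finset.sum_mul_sq_le_sq_mul_sq _ _ _
    _ = (∑ i, ∑ k, M i k ^ 2) * ∑ k, x k ^ 2 := by rw [Finset.sum_mul]
    _ ≤ _ := by
        gcongr

theorem entry_est {L K : ℕ} (p : Fin L → ℝ) (q : Fin K → ℝ) (P Q : ℝ) (hP : 0 < P) (hQ : 0 < Q)
    (hpP : p ⬝ᵥ p = P ^ 2) (hqQ : q ⬝ᵥ q = Q ^ 2)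
    (M : Matrix (Fin L) (Fin K) ℝ) (η : ℝ) (hη : 0 ≤ η)
    (hM : ∑ i, ∑ k, M i k ^ 2 ≤ η ^ 2) (hηPQ : 2 * η ≤ P * Q) (u : Fin L → ℝ)
    (hu : IsTopEigenvector ((Matrix.vecMulVec p q + M) * (Matrix.vecMulVec p q + M)ᵀ) u)
    (i : Fin L) (k : Fin K) :
    |(Matrix.vecMulVec u u * (Matrix.vecMulVec p q + M)) i k - p i * q k -
      (p i * (Mᵀ *ᵥ p) k / P ^ 2 + (M *ᵥ q) i * q k / Q ^ 2
        - p i * q k * (p ⬝ᵥ (M *ᵥ q)) / (P ^ 2 * Q ^ 2))| ≤ 100 * (η ^ 2 / (P * Q)) := by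
  obtain ⟨hu1, μ, hμ, hmax⟩ := hu
  set T := Matrix.vecMulVec p q + M with hT
  have hM' : ∑ i, ∑ k, Mᵀ i k ^ 2 ≤ η ^ 2 := by
    rw [Finset.sum_comm]; exact hM
  let w : EuclideanSpace ℝ (Fin L) := WithLp.toLp 2 (P⁻¹ • p)
  let z : EuclideanSpace ℝ (Fin K) := WithLp.toLp 2 (Q⁻¹ • q)
  have inn : ∀ {n : ℕ} (x y : Fin n → ℝ), inner ℝ (WithLp.toLp 2 x) (WithLp.toLp 2 y) = x ⬝ᵥ y := by
    intro n x y
    rw [EuclideanSpace.inner_toLp_toLp, star_trivial, dotProduct_comm]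
  have hnorm : ∀ {n : ℕ} (x : Fin n → ℝ), x ⬝ᵥ x = 1 → ‖(WithLp.toLp 2 x : EuclideanSpace ℝ (Fin n))‖ = 1 := by
    intro n x hx
    rw [← inn, real_inner_self_eq_norm_sq] at hx
    exact (pow_eq_one_iff_of_nonneg (norm_nonneg _) two_ne_zero).1 hx
  have hw : ‖w‖ = 1 := hnorm _ (by
    rw [smul_dotProduct, dotProduct_smul, hpP, smul_eq_mul, smul_eq_mul]; field_simp)
  have hz : ‖z‖ = 1 := hnorm _ (by
    rw [smul_dotProduct, dotProduct_smul, hqQ, smul_eq_mul, smul_eq_mul]; field_simp)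
  have huu : u ⬝ᵥ u = 1 := by
    rw [← hu1, normSq]; simp [dotProduct, sq]
  have hTt : ∀ x : Fin L → ℝ, Tᵀ *ᵥ x = (p ⬝ᵥ x) • q + Mᵀ *ᵥ x := by
    intro x
    rw [hT, Matrix.transpose_add, Matrix.transpose_vecMulVec, Matrix.add_mulVec, Matrix.vecMulVec_mulVec]
    ext k
    simp [mul_comm]
  have hT2 : ∀ x : Fin K → ℝ, T *ᵥ x = (q ⬝ᵥ x) • p + M *ᵥ x := by
    intro x
    rw [hT, Matrix.add_mulVec, Matrix.vecMulVec_mulVec]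
    ext k
    simp [mul_comm]
  have hadj : ∀ (x : EuclideanSpace ℝ (Fin K)) (y : EuclideanSpace ℝ (Fin L)),
      inner ℝ (Matrix.toEuclideanLin M x) y = inner ℝ x (Matrix.toEuclideanLin Mᵀ y) := by
    intro x y
    have h1 := inn (M *ᵥ x.ofLp) y.ofLp
    have h2 := inn x.ofLp (Mᵀ *ᵥ y.ofLp)
    refine h1.trans (Eq.trans ?_ h2.symm)
    rw [Matrix.mulVec_transpose, dotProduct_comm, Matrix.dotProduct_mulVec, dotProduct_comm]
  have hμ2 : (P * Q - η) ^ 2 ≤ μ := by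
    have h1 := rayleigh_le (T * Tᵀ) (by simpa using Matrix.isHermitian_mul_conjTranspose_self T) μ hmax (P⁻¹ • p)
    have h2 : (P⁻¹ • p) ⬝ᵥ (P⁻¹ • p) = 1 := by
      rw [smul_dotProduct, dotProduct_smul, hpP, smul_eq_mul, smul_eq_mul]; field_simp
    rw [h2, mul_one, ← Matrix.mulVec_mulVec, Matrix.dotProduct_mulVec, ← Matrix.mulVec_transpose, ← inn, real_inner_self_eq_norm_sq, hTt] at h1
    refine le_trans ?_ h1
    have h3 : (WithLp.toLp 2 ((p ⬝ᵥ P⁻¹ • p) • q + Mᵀ *ᵥ (P⁻¹ • p)) : EuclideanSpace ℝ (Fin K)) = (P * Q) • z + Matrix.toEuclideanLin Mᵀ w := by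
      ext j
      simp only [dotProduct_smul, hpP, z, w]
      simp only [PiLp.add_apply, PiLp.smul_apply, Matrix.toLpLin_toLp, Matrix.toLin'_apply, Pi.add_apply, Pi.smul_apply, smul_eq_mul]
      field_simp
    rw [h3]
    have h4 := norm_sub_norm_le ((P * Q) • z) (-(Matrix.toEuclideanLin Mᵀ w))
    rw [sub_neg_eq_add, norm_neg, norm_smul, hz, Real.norm_eq_abs, abs_of_pos (by positivity)] at h4
    have h5 := frob_bound Mᵀ η hη hM' w
    rw [hw] at h5
    have : 0 ≤ P * Q - η := by linarith
    gcongr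
    linarith
  have hP0 := hP.ne'
  have hQ0 := hQ.ne'
  have key := perturb (Matrix.toEuclideanLin M) (Matrix.toEuclideanLin Mᵀ) hadj η (P * Q) hη (by positivity) hηPQ
    (frob_bound M η hη hM) (frob_bound Mᵀ η hη hM') w z hw hz (WithLp.toLp 2 u) (hnorm u huu) (WithLp.toLp 2 (Tᵀ *ᵥ u))
    (by
      rw [hTt]
      simp only [w, z, inn, smul_dotProduct]
      ext j
      simp only [PiLp.add_apply, PiLp.smul_apply, Matrix.toLpLin_toLp, Matrix.toLin'_apply, Pi.add_apply, Pi.smul_apply, smul_eq_mul]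
      field_simp) μ
    (by
      simp only [w, z, inn, smul_dotProduct]
      rw [← Matrix.mulVec_mulVec, hT2] at hμ
      ext j
      have := congrFun hμ j
      simp only [PiLp.add_apply, PiLp.smul_apply, Matrix.toLpLin_toLp, Matrix.toLin'_apply, Pi.add_apply, Pi.smul_apply, smul_eq_mul] at this ⊢
      rw [← this]
      field_simp) hμ2 (EuclideanSpace.single i 1) (EuclideanSpace.single k 1) (by simp) (by simp)
  have hL1 : (Matrix.vecMulVec u u * T) i k = u i * (Tᵀ *ᵥ u) k := by
    simp only [Matrix.mul_apply, Matrix.vecMulVec_apply, Matrix.mulVec, dotProduct, Matrix.transpose_apply, Finset.mul_sum]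
    exact Finset.sum_congr rfl fun _ _ => by ring
  rw [hL1]
  refine le_trans (le_of_eq ?_) key
  congr 1
  have hsi : ∀ {n : ℕ} (i : Fin n) (x : Fin n → ℝ),
      inner ℝ (EuclideanSpace.single i (1:ℝ)) (WithLp.toLp 2 x) = x i := by
    intro n i x
    rw [EuclideanSpace.inner_single_left]; simp
  simp only [w, z, Matrix.toLpLin_toLp, Matrix.toLin'_apply, hsi, inn, Matrix.mulVec_smul, smul_dotProduct, dotProduct_smul, Pi.smul_apply, smul_eq_mul]
  field_simp


theorem hankelize_close {L K : ℕ} (Y Y' : Matrix (Fin L) (Fin K) ℝ) (ε : ℝ) (hε : 0 ≤ ε)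
    (h : ∀ i k, |Y i k - Y' i k| ≤ ε) (j : ℕ) : |hankelize Y j - hankelize Y' j| ≤ ε := by
  unfold hankelize
  set S : ℝ := ∑ i : Fin L, ∑ k : Fin K, if (i : ℕ) + (k : ℕ) = j then (1 : ℝ) else 0 with hS
  have hS0 : 0 ≤ S := Finset.sum_nonneg fun i _ => Finset.sum_nonneg fun k _ => by split_ifs <;> norm_num
  rw [← sub_div, abs_div, abs_of_nonneg hS0]
  apply div_le_of_le_mul₀ hS0 hε
  rw [← Finset.sum_sub_distrib, hS, Finset.mul_sum]
  refine (Finset.abs_sum_le_sum_abs _ _).trans (Finset.sum_le_sum fun i _ => ?_)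
  rw [← Finset.sum_sub_distrib, Finset.mul_sum]
  refine (Finset.abs_sum_le_sum_abs _ _).trans (Finset.sum_le_sum fun k _ => ?_)
  split_ifs
  · simpa using h i k
  · simp

theorem hank_sum (L K ℓ n : ℕ) (hL : ℓ < L) (hK : ℓ < K) (hn : L + K = n + 1) (f : ℕ → ℕ → ℝ) :
    (∑ i : Fin L, ∑ k : Fin K, if (i : ℕ) + (k : ℕ) = n - 1 - ℓ then f i k else 0)
      = ∑ p ∈ Finset.range (ℓ + 1), f (L - 1 - p) (K - 1 - (ℓ - p)) := by
  rw [Fin.sum_univ_eq_sum_range (fun i => ∑ k : Fin K, if i + (k : ℕ) = n - 1 - ℓ then f i k else 0) L]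
  simp_rw [fun i => Fin.sum_univ_eq_sum_range (fun k => if i + k = n - 1 - ℓ then f i k else 0) K]
  rw [← Finset.sum_product', ← Finset.sum_filter]
  symm
  refine Finset.sum_bij (fun p _ => (L - 1 - p, K - 1 - (ℓ - p))) ?_ ?_ ?_ ?_
  · intro p hp
    simp only [Finset.mem_range, Finset.mem_filter, Finset.mem_product] at *
    omega
  · intro p hp p' hp' h
    simp only [Finset.mem_range, Prod.mk.injEq] at *
    omega
  · rintro ⟨i, k⟩ h
    simp only [Finset.mem_range, Finset.mem_filter, Finset.mem_product] at h
    refine ⟨L - 1 - i, ?_, ?_⟩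
    · simp only [Finset.mem_range]; omega
    · simp only [Prod.mk.injEq]; omega
  · intro p hp
    rfl

/-- finite geometric sums -/
noncomputable def gfin (a ξ : ℝ) (L : ℕ) : ℂ := ∑ p ∈ Finset.range L, (Complex.exp (-(Complex.I * ξ)) / a) ^ p

noncomputable def sfin (a : ℝ) (L : ℕ) : ℝ := ∑ p ∈ Finset.range L, ((a ^ 2)⁻¹) ^ p

theorem sfin_eq (a : ℝ) (ha : 1 < a) (L : ℕ) :
    ∑ i ∈ Finset.range L, (a ^ i) ^ 2 = a ^ (2 * (L - 1)) * sfin a L := by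
  rw [sfin, Finset.mul_sum, ← Finset.sum_range_reflect]
  refine Finset.sum_congr rfl fun p hp => ?_
  have ha0 : a ≠ 0 := by positivity
  have hp' : p ≤ L - 1 := by simp at hp; omega
  obtain ⟨m, hm⟩ := Nat.exists_eq_add_of_le hp'
  rw [hm, Nat.add_sub_cancel_left, mul_add, pow_add, inv_pow, pow_mul, pow_mul]
  field_simp
  ring

theorem bfin_eq (a ξ t : ℝ) (ha : 1 < a) (L : ℕ) :
    ∑ i ∈ Finset.range L, (a : ℂ) ^ i * Complex.exp (Complex.I * (ξ * i + t))
      = (a : ℂ) ^ (L - 1) * Complex.exp (Complex.I * (t + ξ * ((L - 1 : ℕ) : ℂ))) * gfin a ξ L := by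
  rw [gfin, Finset.mul_sum, ← Finset.sum_range_reflect]
  refine Finset.sum_congr rfl fun p hp => ?_
  have ha0 : (a : ℂ) ≠ 0 := by
    have : a ≠ 0 := by positivity
    exact_mod_cast this
  have hp' : p ≤ L - 1 := by simp at hp; omega
  obtain ⟨m, hm⟩ := Nat.exists_eq_add_of_le hp'
  rw [hm, Nat.add_sub_cancel_left, div_pow, ← Complex.exp_nat_mul]
  rw [show Complex.I * (ξ * m + t) = Complex.I * (t + ξ * ((p + m : ℕ) : ℂ)) + p * (-(Complex.I * ξ)) by push_cast; ring,
    Complex.exp_add, pow_add]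
  field_simp

noncomputable def mmfin (a ξ : ℝ) (L K p q : ℕ) : ℂ :=
  ((a : ℂ) ^ p)⁻¹ * Complex.exp (-(Complex.I * ξ)) ^ q * gfin a ξ L / sfin a L
  + ((a : ℂ) ^ q)⁻¹ * Complex.exp (-(Complex.I * ξ)) ^ p * gfin a ξ K / sfin a K
  - ((a : ℂ) ^ (p + q))⁻¹ * gfin a ξ L * gfin a ξ K / (sfin a L * sfin a K)

theorem sfin_pos (a : ℝ) (ha : 1 < a) (L : ℕ) (hL : 0 < L) : 0 < sfin a L := by
  apply Finset.sum_pos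
  · intro i _; positivity
  · simp; omega

/-- the tangent-space entry -/
noncomputable def tang (a ξ φ : ℝ) (L K i k : ℕ) : ℝ :=
  a ^ i * (∑ i' ∈ Finset.range L, a ^ i' * Real.cos (ξ * ((i' + k : ℕ) : ℝ) + φ)) / (∑ i ∈ Finset.range L, (a ^ i) ^ 2)
  + (∑ k' ∈ Finset.range K, a ^ k' * Real.cos (ξ * ((i + k' : ℕ) : ℝ) + φ)) * a ^ k / (∑ i ∈ Finset.range K, (a ^ i) ^ 2)
  - a ^ i * a ^ k * (∑ i' ∈ Finset.range L, a ^ i' * ∑ k' ∈ Finset.range K, a ^ k' * Real.cos (ξ * ((i' + k' : ℕ) : ℝ) + φ))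
    / ((∑ i ∈ Finset.range L, (a ^ i) ^ 2) * (∑ i ∈ Finset.range K, (a ^ i) ^ 2))

theorem tang_eq (a ξ φ : ℝ) (ha : 1 < a) (L K n p q : ℕ) (hp : p < L) (hq : q < K) (hn : L + K = n + 1) :
    tang a ξ φ L K (L - 1 - p) (K - 1 - q)
      = (Complex.exp (Complex.I * (ξ * ((n - 1 : ℕ) : ℂ) + φ)) * mmfin a ξ L K p q).re := by
  have ha0 : (a : ℂ) ≠ 0 := by
    have : a ≠ 0 := by positivity
    exact_mod_cast this
  have hsL : ((sfin a L : ℝ) : ℂ) ≠ 0 := by exact_mod_cast (sfin_pos a ha L (by omega)).ne'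
  have hsK : ((sfin a K : ℝ) : ℂ) ≠ 0 := by exact_mod_cast (sfin_pos a ha K (by omega)).ne'
  have hcos : ∀ x : ℝ, Real.cos x = (Complex.exp (Complex.I * x)).re := by
    intro x; rw [mul_comm, Complex.exp_ofReal_mul_I_re]
  -- the three sums
  have hb : ∀ k : ℕ, ∑ i' ∈ Finset.range L, a ^ i' * Real.cos (ξ * ((i' + k : ℕ) : ℝ) + φ)
      = ((a : ℂ) ^ (L - 1) * Complex.exp (Complex.I * ((ξ * k + φ : ℝ) + ξ * ((L - 1 : ℕ) : ℂ))) * gfin a ξ L).re := by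
    intro k
    rw [← bfin_eq a ξ (ξ * k + φ) ha L, Complex.re_sum]
    refine Finset.sum_congr rfl fun i _ => ?_
    rw [← Complex.ofReal_pow, Complex.re_ofReal_mul, hcos]
    congr 3
    push_cast; ring
  have hc : ∀ i : ℕ, ∑ k' ∈ Finset.range K, a ^ k' * Real.cos (ξ * ((i + k' : ℕ) : ℝ) + φ)
      = ((a : ℂ) ^ (K - 1) * Complex.exp (Complex.I * ((ξ * i + φ : ℝ) + ξ * ((K - 1 : ℕ) : ℂ))) * gfin a ξ K).re := by
    intro k
    rw [← bfin_eq a ξ (ξ * k + φ) ha K, Complex.re_sum]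
    refine Finset.sum_congr rfl fun i _ => ?_
    rw [← Complex.ofReal_pow, Complex.re_ofReal_mul, hcos]
    congr 3
    push_cast; ring
  have hd : ∑ i' ∈ Finset.range L, a ^ i' * ∑ k' ∈ Finset.range K, a ^ k' * Real.cos (ξ * ((i' + k' : ℕ) : ℝ) + φ)
      = ((a : ℂ) ^ (L - 1) * (a : ℂ) ^ (K - 1) * Complex.exp (Complex.I * (ξ * ((n - 1 : ℕ) : ℂ) + φ)) * gfin a ξ L * gfin a ξ K).re := by
    have : (a : ℂ) ^ (L - 1) * (a : ℂ) ^ (K - 1) * Complex.exp (Complex.I * (ξ * ((n - 1 : ℕ) : ℂ) + φ)) * gfin a ξ L * gfin a ξ K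
       = ((a : ℂ) ^ (L - 1) * Complex.exp (Complex.I * ((ξ * (K - 1 : ℕ) + φ : ℝ) + ξ * ((L - 1 : ℕ) : ℂ))) * gfin a ξ L) * ((a : ℂ) ^ (K - 1) * gfin a ξ K) := by
      rw [show n - 1 = (L - 1) + (K - 1) by omega]
      rw [show Complex.I * (ξ * (((L - 1) + (K - 1) : ℕ) : ℂ) + φ) = Complex.I * ((ξ * (K - 1 : ℕ) + φ : ℝ) + ξ * ((L - 1 : ℕ) : ℂ)) by
        push_cast; ring]
      ring
    rw [this, ← bfin_eq a ξ _ ha L, Finset.sum_mul, Complex.re_sum]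
    refine Finset.sum_congr rfl fun i _ => ?_
    rw [hc, ← Complex.re_ofReal_mul]
    congr 1
    push_cast
    rw [show Complex.I * (ξ * (i:ℂ) + φ + ξ * ((K - 1 : ℕ) : ℂ)) = Complex.I * (ξ * (i:ℂ) + (ξ * ((K - 1 : ℕ) : ℂ) + φ)) by ring]
    ring
  rw [tang, hb, hc, hd, sfin_eq a ha, sfin_eq a ha]
  have hre : ∀ (x : ℝ) (y : ℂ), x * y.re = ((x : ℂ) * y).re := fun x y => (Complex.re_ofReal_mul x y).symm
  have hre' : ∀ (x : ℝ) (y : ℂ), y.re / x = (y / (x : ℂ)).re := fun x y => (Complex.div_ofReal_re y x).symm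
  rw [mul_comm (Complex.re _) (a ^ (K - 1 - q)), hre, hre, hre, hre', hre', hre', ← Complex.add_re, ← Complex.sub_re]
  congr 1
  obtain ⟨l, rfl⟩ := Nat.exists_eq_add_of_lt hp
  obtain ⟨k, rfl⟩ := Nat.exists_eq_add_of_lt hq
  have e1 : p + l + 1 - 1 = p + l := by omega
  have e2 : q + k + 1 - 1 = q + k := by omega
  rw [e1, e2, Nat.add_sub_cancel_left, Nat.add_sub_cancel_left, mmfin]
  have e3 : n - 1 = p + l + (q + k) := by omega
  rw [e3]
  set X := Complex.exp (Complex.I * (ξ * ((p + l + (q + k) : ℕ) : ℂ) + φ)) with hX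
  set r := Complex.exp (-(Complex.I * ξ)) with hr
  have x1 : Complex.exp (Complex.I * ((ξ * k + φ : ℝ) + ξ * ((p + l : ℕ) : ℂ))) = X * r ^ q := by
    rw [hX, hr, ← Complex.exp_nat_mul, ← Complex.exp_add]; congr 1; push_cast; ring
  have x2 : Complex.exp (Complex.I * ((ξ * l + φ : ℝ) + ξ * ((q + k : ℕ) : ℂ))) = X * r ^ p := by
    rw [hX, hr, ← Complex.exp_nat_mul, ← Complex.exp_add]; congr 1; push_cast; ring
  rw [x1, x2]
  push_cast
  simp only [mul_add, pow_add, pow_mul]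
  simp only [pow_two, mul_pow]
  field_simp

theorem gfin_tendsto (a ξ : ℝ) (ha : 1 < a) :
    Tendsto (gfin a ξ) atTop (nhds (1 - Complex.exp (-(Complex.I * ξ)) / a)⁻¹) := by
  apply HasSum.tendsto_sum_nat
  apply hasSum_geometric_of_norm_lt_one
  have : ‖Complex.exp (-(Complex.I * ξ))‖ = 1 := by
    rw [show -(Complex.I * ξ) = ((-ξ : ℝ) : ℂ) * Complex.I by push_cast; ring]
    exact Complex.norm_exp_ofReal_mul_I _
  rw [norm_div, this, Complex.norm_real, Real.norm_eq_abs, abs_of_pos (by linarith), div_lt_one (by linarith)]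
  exact ha

theorem sfin_tendsto (a : ℝ) (ha : 1 < a) :
    Tendsto (sfin a) atTop (nhds (1 - (a ^ 2)⁻¹)⁻¹) := by
  apply HasSum.tendsto_sum_nat
  apply hasSum_geometric_of_lt_one (by positivity)
  apply inv_lt_one_of_one_lt₀
  nlinarith

noncomputable def glim (a ξ : ℝ) : ℂ := (1 - Complex.exp (-(Complex.I * ξ)) / a)⁻¹

noncomputable def mmlim (a ξ : ℝ) (p q : ℕ) : ℂ :=
  ((a : ℂ) ^ p)⁻¹ * Complex.exp (-(Complex.I * ξ)) ^ q * glim a ξ / ((1 - (a ^ 2)⁻¹)⁻¹ : ℝ)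
  + ((a : ℂ) ^ q)⁻¹ * Complex.exp (-(Complex.I * ξ)) ^ p * glim a ξ / ((1 - (a ^ 2)⁻¹)⁻¹ : ℝ)
  - ((a : ℂ) ^ (p + q))⁻¹ * glim a ξ * glim a ξ / (((1 - (a ^ 2)⁻¹)⁻¹ : ℝ) * ((1 - (a ^ 2)⁻¹)⁻¹ : ℝ))

theorem mm_tendsto (a ξ : ℝ) (ha : 1 < a) (L K : ℕ → ℕ) (hL : Tendsto L atTop atTop) (hK : Tendsto K atTop atTop)
    (p q : ℕ) : Tendsto (fun n => mmfin a ξ (L n) (K n) p q) atTop (nhds (mmlim a ξ p q)) := by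
  have g1 := (gfin_tendsto a ξ ha).comp hL
  have g2 := (gfin_tendsto a ξ ha).comp hK
  have s1 := ((Complex.continuous_ofReal.tendsto _).comp (sfin_tendsto a ha)).comp hL
  have s2 := ((Complex.continuous_ofReal.tendsto _).comp (sfin_tendsto a ha)).comp hK
  have hne : (((1 - (a ^ 2)⁻¹)⁻¹ : ℝ) : ℂ) ≠ 0 := by
    have : (a ^ 2)⁻¹ < 1 := by
      apply inv_lt_one_of_one_lt₀
      nlinarith
    have : (1 - (a ^ 2)⁻¹)⁻¹ ≠ 0 := inv_ne_zero (by linarith)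
    exact_mod_cast this
  refine Tendsto.sub (Tendsto.add ?_ ?_) ?_
  · exact (g1.const_mul _).div s1 hne
  · exact (g2.const_mul _).div s2 hne
  · exact ((g1.const_mul _).mul g2).div (s1.mul s2) (mul_ne_zero hne hne)


theorem Z_eq (a ξ : ℝ) (ha : 1 < a) (ℓ : ℕ) :
    (∑ p ∈ Finset.range (ℓ + 1), mmlim a ξ p (ℓ - p)) / ((ℓ:ℂ) + 1) =
      (Gfun a ξ : ℂ) * (C1 a ξ ℓ - Complex.I * C2 a ξ ℓ) := by
  have haR : a ≠ 0 := by positivity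
  have ha0 : (a : ℂ) ≠ 0 := by exact_mod_cast haR
  have hℓ : (ℓ : ℂ) + 1 ≠ 0 := by exact_mod_cast Nat.succ_ne_zero ℓ
  set r := Complex.exp (-(Complex.I * ξ)) with hr
  set r' := Complex.exp (Complex.I * ξ) with hr'
  have hrr : r * r' = 1 := by rw [hr, hr', ← Complex.exp_add]; simp
  have hrc : r = Complex.cos ξ - Complex.I * Complex.sin ξ := by
    rw [hr, show -(Complex.I * ξ) = (-ξ : ℂ) * Complex.I by ring, Complex.exp_mul_I, Complex.cos_neg, Complex.sin_neg]; ring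
  have hrc' : r' = Complex.cos ξ + Complex.I * Complex.sin ξ := by
    rw [hr', mul_comm, Complex.exp_mul_I]; ring
  have hrl : r ^ ℓ = Complex.cos (ℓ * ξ) - Complex.I * Complex.sin (ℓ * ξ) := by
    rw [hr, ← Complex.exp_nat_mul, show (ℓ:ℂ) * -(Complex.I * ξ) = (-(ℓ * ξ) : ℂ) * Complex.I by ring, Complex.exp_mul_I, Complex.cos_neg, Complex.sin_neg]; ring
  have hden : a ^ 2 + 1 - 2 * a * Real.cos ξ ≠ 0 := by
    have := Real.cos_le_one ξ
    nlinarith [sq_nonneg (a - 1)]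
  have hdenC : ((a:ℂ) ^ 2 + 1 - 2 * a * Complex.cos ξ) ≠ 0 := by exact_mod_cast hden
  have hfac : ((a:ℂ) ^ 2 + 1 - 2 * a * Complex.cos ξ) = (a - r) * (a - r') := by
    have : Complex.cos ξ = (r + r') / 2 := by rw [hrc, hrc']; ring
    rw [this]; linear_combination -hrr
  have h1 : (a:ℂ) - r ≠ 0 := fun h => hdenC (by rw [hfac, h, zero_mul])
  have h2 : (a:ℂ) - r' ≠ 0 := fun h => hdenC (by rw [hfac, h, mul_zero])
  have hr0 : r ≠ 0 := Complex.exp_ne_zero _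
  have hτ : (((1 - (a ^ 2)⁻¹)⁻¹ : ℝ) : ℂ)⁻¹ = ((a:ℂ) ^ 2 - 1) / a ^ 2 := by
    push_cast; rw [inv_inv]; field_simp
  have hG : (Gfun a ξ : ℂ) = ((a:ℂ) ^ 2 - 1) / (a * ((a - r) * (a - r'))) := by
    rw [Gfun, ← hfac]; push_cast; rfl
  have hg : glim a ξ = a / (a - r) := by
    rw [glim, ← hr]; field_simp
  have hτg : (((1 - (a ^ 2)⁻¹)⁻¹ : ℝ) : ℂ)⁻¹ * glim a ξ = Gfun a ξ * (a - r') := by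
    rw [hτ, hg, hG]; field_simp
  -- geometric sum
  set S : ℂ := ∑ p ∈ Finset.range (ℓ + 1), ((a : ℂ) ^ p)⁻¹ * r ^ (ℓ - p) with hS
  have hS' : ∑ p ∈ Finset.range (ℓ + 1), ((a : ℂ) ^ (ℓ - p))⁻¹ * r ^ p = S := by
    rw [hS, ← Finset.sum_range_reflect]
    refine Finset.sum_congr rfl fun p hp => ?_
    have hp' : p ≤ ℓ := by simp at hp; omega
    rw [show ℓ + 1 - 1 - p = ℓ - p by omega, show ℓ - (ℓ - p) = p by omega]
  have hSg : S * ((a:ℂ)⁻¹ - r) = ((a:ℂ)⁻¹) ^ (ℓ + 1) - r ^ (ℓ + 1) := by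
    rw [← geom_sum₂_mul, hS]
    congr 1
    refine Finset.sum_congr rfl fun p hp => ?_
    rw [inv_pow, Nat.add_sub_cancel]
  have hSa : (a - r') * S = a * r ^ ℓ - ((a:ℂ) ^ ℓ)⁻¹ * r' := by
    have e1 : (a - r') * S = -(a * r') * (S * ((a:ℂ)⁻¹ - r)) := by
      have : (a:ℂ) * (a:ℂ)⁻¹ = 1 := mul_inv_cancel₀ ha0
      linear_combination (r' * S) * this - (a * S) * hrr
    rw [e1, hSg, pow_succ, pow_succ, inv_pow]
    have : (a:ℂ) * (a:ℂ)⁻¹ = 1 := mul_inv_cancel₀ ha0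
    linear_combination (-r' * ((a:ℂ) ^ ℓ)⁻¹) * this + (a * r ^ ℓ) * hrr
  have hsum : ∑ p ∈ Finset.range (ℓ + 1), mmlim a ξ p (ℓ - p) =
      2 * (Gfun a ξ * (a - r')) * S - (ℓ + 1) * ((Gfun a ξ * (a - r')) ^ 2 * ((a:ℂ) ^ ℓ)⁻¹) := by
    rw [← hτg]
    have : ∀ p ∈ Finset.range (ℓ + 1), mmlim a ξ p (ℓ - p) =
        (((1 - (a ^ 2)⁻¹)⁻¹ : ℝ) : ℂ)⁻¹ * glim a ξ * (((a : ℂ) ^ p)⁻¹ * r ^ (ℓ - p))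
        + (((1 - (a ^ 2)⁻¹)⁻¹ : ℝ) : ℂ)⁻¹ * glim a ξ * (((a : ℂ) ^ (ℓ - p))⁻¹ * r ^ p)
        - ((((1 - (a ^ 2)⁻¹)⁻¹ : ℝ) : ℂ)⁻¹ * glim a ξ) ^ 2 * ((a:ℂ) ^ ℓ)⁻¹ := by
      intro p hp
      have hp' : p ≤ ℓ := by simp at hp; omega
      rw [mmlim, show p + (ℓ - p) = ℓ by omega, ← hr]
      simp only [div_eq_mul_inv, mul_inv]
      ring
    rw [Finset.sum_congr rfl this, Finset.sum_sub_distrib, Finset.sum_add_distrib, ← Finset.mul_sum, ← Finset.mul_sum, hS', ← hS]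
    simp only [Finset.sum_const, Finset.card_range, nsmul_eq_mul]
    push_cast
    ring
  have hC : (C1 a ξ ℓ : ℂ) - Complex.I * C2 a ξ ℓ = 2 / (ℓ + 1) * (a * r ^ ℓ - ((a:ℂ) ^ ℓ)⁻¹ * r')
      - Gfun a ξ * ((a:ℂ) ^ ℓ)⁻¹ * (a - r') ^ 2 := by
    rw [C1, C2]
    push_cast
    rw [_root_.zpow_neg, _root_.zpow_natCast, hrl, hrc', add_comm (1:ℂ) ℓ]
    have hI : Complex.I ^ 2 = -1 := Complex.I_sq
    have hsc := Complex.sin_sq_add_cos_sq ξ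
    linear_combination (- Gfun a ξ * ((a:ℂ) ^ ℓ)⁻¹ * Complex.sin ξ ^ 2 * (-1)) * hI + (Gfun a ξ * ((a:ℂ) ^ ℓ)⁻¹) * hsc
  rw [hsum, hC, mul_sub, ← hSa]
  field_simp

theorem Gfun_pos (a ξ : ℝ) (ha : 1 < a) : 0 < Gfun a ξ := by
  have : 0 < a ^ 2 + 1 - 2 * a * Real.cos ξ := by
    have := Real.cos_le_one ξ
    nlinarith [sq_nonneg (a - 1)]
  have : 0 < a ^ 2 - 1 := by nlinarith
  unfold Gfun
  positivity

theorem Z_norm (a ξ : ℝ) (ha : 1 < a) (ℓ : ℕ) :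
    ‖(Gfun a ξ : ℂ) * (C1 a ξ ℓ - Complex.I * C2 a ξ ℓ)‖ = Dfun a ξ ℓ := by
  rw [norm_mul, Complex.norm_real, Real.norm_eq_abs, abs_of_pos (Gfun_pos a ξ ha), Dfun]
  congr 1
  rw [Complex.norm_def, Complex.normSq_apply]
  congr 1
  simp
  ring


theorem rec_entry (a ξ φ δ : ℝ) (ha : 1 < a) (L K n : ℕ) (hL : 0 < L) (hK : 0 < K) (hn : L + K = n + 1)
    (hbig : 2 * (|δ| * n) ≤ a ^ (n - 1)) (u : Fin L → ℝ)
    (hu : IsTopEigenvector (HdeltaSq a ξ φ δ L K) u) (i : Fin L) (k : Fin K) :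
    |(Matrix.vecMulVec u u * (hankelOf (expSignal a) L K + δ • hankelOf (cosNoise ξ φ) L K)) i k
      - (a ^ ((i:ℕ) + (k:ℕ)) + δ * tang a ξ φ L K i k)| ≤ 100 * ((|δ| * n) ^ 2 / a ^ (n - 1)) := by
  have ha0 : 0 < a := by linarith
  set p : Fin L → ℝ := fun i => a ^ (i:ℕ) with hp
  set q : Fin K → ℝ := fun i => a ^ (i:ℕ) with hq
  have hH : hankelOf (expSignal a) L K = vecMulVec p q := by
    ext i k; simp [hankelOf, expSignal, vecMulVec_apply, hp, hq, pow_add]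
  have hpp : p ⬝ᵥ p = ∑ i ∈ Finset.range L, (a ^ i) ^ 2 := by
    rw [← Fin.sum_univ_eq_sum_range (fun i => (a ^ i) ^ 2)]
    simp [dotProduct, hp, pow_two]
  have hqq : q ⬝ᵥ q = ∑ i ∈ Finset.range K, (a ^ i) ^ 2 := by
    rw [← Fin.sum_univ_eq_sum_range (fun i => (a ^ i) ^ 2)]
    simp [dotProduct, hq, pow_two]
  have hge : ∀ m : ℕ, 0 < m → (a ^ (m - 1)) ^ 2 ≤ ∑ i ∈ Finset.range m, (a ^ i) ^ 2 := by
    intro m hm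
    exact Finset.single_le_sum (f := fun i => (a ^ i) ^ 2) (fun i _ => by positivity) (by simp; omega)
  set P := Real.sqrt (∑ i ∈ Finset.range L, (a ^ i) ^ 2) with hPd
  set Q := Real.sqrt (∑ i ∈ Finset.range K, (a ^ i) ^ 2) with hQd
  have hP2 : P ^ 2 = ∑ i ∈ Finset.range L, (a ^ i) ^ 2 := Real.sq_sqrt (Finset.sum_nonneg fun i _ => by positivity)
  have hQ2 : Q ^ 2 = ∑ i ∈ Finset.range K, (a ^ i) ^ 2 := Real.sq_sqrt (Finset.sum_nonneg fun i _ => by positivity)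
  have hPge : a ^ (L - 1) ≤ P := Real.le_sqrt_of_sq_le (hge L hL)
  have hQge : a ^ (K - 1) ≤ Q := Real.le_sqrt_of_sq_le (hge K hK)
  have hPpos : 0 < P := lt_of_lt_of_le (by positivity) hPge
  have hQpos : 0 < Q := lt_of_lt_of_le (by positivity) hQge
  have hPQ : a ^ (n - 1) ≤ P * Q := by
    rw [show n - 1 = (L - 1) + (K - 1) by omega, pow_add]
    exact mul_le_mul hPge hQge (by positivity) hPpos.le
  set M := δ • hankelOf (cosNoise ξ φ) L K with hM
  have hMik : ∀ i k, M i k = δ * Real.cos (ξ * (((i:ℕ) + (k:ℕ) : ℕ) : ℝ) + φ) := by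
    intro i k; simp [hM, hankelOf, cosNoise]
  have hMb : ∑ i, ∑ k, M i k ^ 2 ≤ (|δ| * n) ^ 2 := by
    have h1 : ∀ i k, M i k ^ 2 ≤ δ ^ 2 := by
      intro i k
      rw [hMik, mul_pow]
      have := Real.cos_sq_le_one (ξ * (((i:ℕ) + (k:ℕ) : ℕ) : ℝ) + φ)
      nlinarith [sq_nonneg δ]
    calc ∑ i, ∑ k, M i k ^ 2 ≤ ∑ i : Fin L, ∑ k : Fin K, δ ^ 2 :=
          Finset.sum_le_sum fun i _ => Finset.sum_le_sum fun k _ => h1 i k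
      _ = δ ^ 2 * ((L:ℝ) * K) := by simp; ring
      _ ≤ δ ^ 2 * ((n:ℝ) * n) := by
          have : (L:ℝ) ≤ n := by exact_mod_cast (by omega : L ≤ n)
          have : (K:ℝ) ≤ n := by exact_mod_cast (by omega : K ≤ n)
          gcongr
      _ = _ := by rw [mul_pow, sq_abs]; ring
  have hu' : IsTopEigenvector ((vecMulVec p q + M) * (vecMulVec p q + M)ᵀ) u := by
    have := hu
    unfold HdeltaSq at this
    simpa [hH, ← hM] using this
  have key := entry_est p q P Q hPpos hQpos (hpp.trans hP2.symm) (hqq.trans hQ2.symm) M (|δ| * n)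
    (by positivity) hMb (hbig.trans hPQ) u hu' i k
  have t1 : (Mᵀ *ᵥ p) k = δ * ∑ i' ∈ Finset.range L, a ^ i' * Real.cos (ξ * ((i' + k : ℕ) : ℝ) + φ) := by
    rw [← Fin.sum_univ_eq_sum_range (fun i' => a ^ i' * Real.cos (ξ * ((i' + k : ℕ) : ℝ) + φ)), Finset.mul_sum]
    simp only [mulVec, dotProduct, transpose_apply, hMik, hp]
    exact Finset.sum_congr rfl fun i _ => by ring
  have t2 : ∀ i, (M *ᵥ q) i = δ * ∑ k' ∈ Finset.range K, a ^ k' * Real.cos (ξ * ((i + k' : ℕ) : ℝ) + φ) := by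
    intro i
    rw [← Fin.sum_univ_eq_sum_range (fun k' => a ^ k' * Real.cos (ξ * ((i + k' : ℕ) : ℝ) + φ)), Finset.mul_sum]
    simp only [mulVec, dotProduct, hMik, hq]
    exact Finset.sum_congr rfl fun i _ => by ring
  have t3 : p ⬝ᵥ (M *ᵥ q) = δ * ∑ i' ∈ Finset.range L, a ^ i' * ∑ k' ∈ Finset.range K, a ^ k' * Real.cos (ξ * ((i' + k' : ℕ) : ℝ) + φ) := by
    rw [← Fin.sum_univ_eq_sum_range (fun i' => a ^ i' * ∑ k' ∈ Finset.range K, a ^ k' * Real.cos (ξ * ((i' + k' : ℕ) : ℝ) + φ)), Finset.mul_sum]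
    simp only [dotProduct, t2, hp]
    exact Finset.sum_congr rfl fun i _ => by ring
  rw [t1, t2, t3, hP2, hQ2] at key
  rw [hH]
  refine le_trans (le_of_eq ?_) (key.trans ?_)
  · congr 1
    rw [tang, pow_add]
    simp only [hp, hq]
    ring
  · gcongr

theorem rec_fin (a ξ φ δ : ℝ) (ha : 1 < a) (hδ : δ ≠ 0) (ℓ L K n : ℕ) (hL : ℓ < L) (hK : ℓ < K) (hn : L + K = n + 1)
    (hbig : 2 * (|δ| * n) ≤ a ^ (n - 1)) (u : Fin L → ℝ)
    (hu : IsTopEigenvector (HdeltaSq a ξ φ δ L K) u) :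
    |recErr a ξ φ δ L K u (n - 1 - ℓ) / δ - (Complex.exp (Complex.I * (ξ * ((n - 1 : ℕ) : ℂ) + φ)) *
      ((∑ p ∈ Finset.range (ℓ + 1), mmfin a ξ L K p (ℓ - p)) / ((ℓ:ℂ) + 1))).re|
      ≤ (100 * ((|δ| * n) ^ 2 / a ^ (n - 1))) / |δ| := by
  have ha0 : 0 < a := by linarith
  have hc := hankelize_close (Matrix.vecMulVec u u * (hankelOf (expSignal a) L K + δ • hankelOf (cosNoise ξ φ) L K))
    (Matrix.of fun i k => (a ^ ((i:ℕ) + (k:ℕ)) + δ * tang a ξ φ L K i k)) (100 * ((|δ| * n) ^ 2 / a ^ (n - 1)))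
    (by positivity) (fun i k => rec_entry a ξ φ δ ha L K n (by omega) (by omega) hn hbig u hu i k) (n - 1 - ℓ)
  have hcnt := hank_sum L K ℓ n hL hK hn (fun _ _ => 1)
  have hsum := hank_sum L K ℓ n hL hK hn (fun i k => a ^ (i + k) + δ * tang a ξ φ L K i k)
  have hℓ : (ℓ:ℝ) + 1 ≠ 0 := by positivity
  have hY : hankelize (Matrix.of fun (i : Fin L) (k : Fin K) => (a ^ ((i:ℕ) + (k:ℕ)) + δ * tang a ξ φ L K i k)) (n - 1 - ℓ)
      = a ^ (n - 1 - ℓ) + δ * (Complex.exp (Complex.I * (ξ * ((n - 1 : ℕ) : ℂ) + φ)) *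
      ((∑ p ∈ Finset.range (ℓ + 1), mmfin a ξ L K p (ℓ - p)) / ((ℓ:ℂ) + 1))).re := by
    unfold hankelize
    simp only [Matrix.of_apply]
    rw [hcnt, hsum]
    have e : ∀ p ∈ Finset.range (ℓ + 1), a ^ (L - 1 - p + (K - 1 - (ℓ - p))) + δ * tang a ξ φ L K (L - 1 - p) (K - 1 - (ℓ - p))
       = a ^ (n - 1 - ℓ) + δ * (Complex.exp (Complex.I * (ξ * ((n - 1 : ℕ) : ℂ) + φ)) * mmfin a ξ L K p (ℓ - p)).re := by
      intro p hp
      simp only [Finset.mem_range] at hp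
      rw [tang_eq a ξ φ ha L K n p (ℓ - p) (by omega) (by omega) hn, show L - 1 - p + (K - 1 - (ℓ - p)) = n - 1 - ℓ by omega]
    rw [Finset.sum_congr rfl e, Finset.sum_add_distrib, ← Finset.mul_sum, ← Complex.re_sum, ← Finset.mul_sum]
    rw [← mul_div_assoc, show ((ℓ:ℂ) + 1) = ((ℓ + 1 : ℝ) : ℂ) by push_cast; rfl, Complex.div_ofReal_re]
    simp only [Finset.sum_const, Finset.card_range, nsmul_eq_mul]
    push_cast
    field_simp
  rw [hY] at hc
  rw [le_div_iff₀ (abs_pos.mpr hδ), ← abs_mul]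
  refine le_trans (le_of_eq ?_) hc
  congr 1
  rw [recErr]
  field_simp
  ring

theorem rec_asym (a ξ φ δ α : ℝ) (ha : 1 < a) (hδ : δ ≠ 0) (hα : 0 < α) (L K : ℕ → ℕ)
    (hLK : ∀ N, 3 ≤ N → 1 < L N ∧ L N ≤ K N ∧ L N + K N = N + 1)
    (hlim : Tendsto (fun N : ℕ => (L N : ℝ) / (N : ℝ)) atTop (nhds α)) (ℓ : ℕ)
    (u : ∀ n : ℕ, Fin (L n) → ℝ)
    (hu : ∀ n, 3 ≤ n → IsTopEigenvector (HdeltaSq a ξ φ δ (L n) (K n)) (u n)) :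
    Tendsto (fun n : ℕ => recErr a ξ φ δ (L n) (K n) (u n) (n - 1 - ℓ) / δ
      - (Complex.exp (Complex.I * (ξ * ((n - 1 : ℕ) : ℂ) + φ)) *
        ((Gfun a ξ : ℂ) * (C1 a ξ ℓ - Complex.I * C2 a ξ ℓ))).re) atTop (nhds 0) := by
  have ha0 : 0 < a := by linarith
  have hLt : Tendsto L atTop atTop := by
    rw [← tendsto_natCast_atTop_iff (R := ℝ)]
    have h1 : Tendsto (fun N : ℕ => (L N : ℝ) / (N : ℝ) * N) atTop atTop :=
      hlim.pos_mul_atTop hα tendsto_natCast_atTop_atTop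
    refine h1.congr' ?_
    filter_upwards [eventually_gt_atTop 0] with N hN
    have : (N:ℝ) ≠ 0 := by positivity
    field_simp
  have hKt : Tendsto K atTop atTop := by
    refine tendsto_atTop_mono' _ ?_ hLt
    filter_upwards [eventually_ge_atTop 3] with N hN using (hLK N hN).2.1
  have hpow : ∀ k : ℕ, Tendsto (fun n : ℕ => (n:ℝ) ^ k / a ^ (n - 1)) atTop (nhds 0) := by
    intro k
    have := (tendsto_pow_const_div_const_pow_of_one_lt k ha).const_mul a
    rw [mul_zero] at this
    refine this.congr' ?_
    filter_upwards [eventually_gt_atTop 0] with n hn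
    obtain ⟨m, rfl⟩ : ∃ m, n = m + 1 := ⟨n - 1, by omega⟩
    rw [Nat.add_sub_cancel, pow_succ a m]
    field_simp
  have hbig : ∀ᶠ n : ℕ in atTop, 2 * (|δ| * n) ≤ a ^ (n - 1) := by
    have h1 := (hpow 1).const_mul (2 * |δ|)
    rw [mul_zero] at h1
    filter_upwards [h1.eventually (gt_mem_nhds zero_lt_one)] with n hn
    have hpos : 0 < a ^ (n - 1) := by positivity
    have h2 : 2 * |δ| * ((n:ℝ) ^ 1 / a ^ (n - 1)) = (2 * (|δ| * n)) / a ^ (n - 1) := by ring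
    rw [h2, div_lt_one hpos] at hn
    exact hn.le
  set Zn : ℕ → ℂ := fun n => (∑ p ∈ Finset.range (ℓ + 1), mmfin a ξ (L n) (K n) p (ℓ - p)) / ((ℓ:ℂ) + 1) with hZn
  set Z : ℂ := (Gfun a ξ : ℂ) * (C1 a ξ ℓ - Complex.I * C2 a ξ ℓ) with hZ
  have hZt : Tendsto Zn atTop (nhds Z) := by
    rw [hZ, ← Z_eq a ξ ha ℓ]
    exact (tendsto_finsetSum _ fun p _ => mm_tendsto a ξ ha L K hLt hKt p (ℓ - p)).div_const _
  have hZ0 : Tendsto (fun n => ‖Zn n - Z‖) atTop (nhds 0) := tendsto_iff_norm_sub_tendsto_zero.mp hZt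
  have herr : Tendsto (fun n : ℕ => (100 * ((|δ| * n) ^ 2 / a ^ (n - 1))) / |δ|) atTop (nhds 0) := by
    have h1 := (hpow 2).const_mul (100 * |δ| ^ 2 / |δ|)
    rw [mul_zero] at h1
    refine h1.congr fun n => ?_
    ring
  have hb := herr.add hZ0
  rw [add_zero] at hb
  refine squeeze_zero_norm' ?_ hb
  filter_upwards [hbig, eventually_ge_atTop 3, hLt.eventually_gt_atTop ℓ, hKt.eventually_gt_atTop ℓ] with n h1 h2 h3 h4
  have h5 := rec_fin a ξ φ δ ha hδ ℓ (L n) (K n) n h3 h4 (hLK n h2).2.2 h1 (u n) (hu n h2)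
  have h6 : |(Complex.exp (Complex.I * (ξ * ((n - 1 : ℕ) : ℂ) + φ)) * Zn n).re
      - (Complex.exp (Complex.I * (ξ * ((n - 1 : ℕ) : ℂ) + φ)) * Z).re| ≤ ‖Zn n - Z‖ := by
    rw [← Complex.sub_re, ← mul_sub]
    refine (Complex.abs_re_le_norm _).trans ?_
    rw [norm_mul, show Complex.I * (ξ * ((n - 1 : ℕ) : ℂ) + φ) = ((ξ * ((n - 1 : ℕ) : ℝ) + φ : ℝ) : ℂ) * Complex.I by
      push_cast; ring, Complex.norm_exp_ofReal_mul_I, one_mul]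
  rw [Real.norm_eq_abs]
  refine (abs_sub_le _ ((Complex.exp (Complex.I * (ξ * ((n - 1 : ℕ) : ℂ) + φ)) * Zn n).re) _).trans (add_le_add h5 h6)


end helpers

/-- for irrational frequency `ω`, the empirical distribution of the
normalized last reconstruction errors converges to the arcsine law on
`[-D(ℓ), D(ℓ)]`. -/
theorem stmt_7 (a ξ φ α : ℝ) (ha : 1 < a) (hξ : ξ ∈ Set.Ioo 0 Real.pi)
    (hφ : φ ∈ Set.Ico 0 (2 * Real.pi)) (hα : α ∈ Set.Ioo (0 : ℝ) 1)
    (L K : ℕ → ℕ)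
    (hLK : ∀ N, 3 ≤ N → 1 < L N ∧ L N ≤ K N ∧ L N + K N = N + 1)
    (hlim : Tendsto (fun N : ℕ => (L N : ℝ) / (N : ℝ)) atTop (nhds α))
    (ω : ℝ) (hω : Irrational ω) (hω12 : ω ∈ Set.Ioo (0 : ℝ) (1 / 2))
    (hξval : ξ = 2 * Real.pi * ω)
    (ℓ : ℕ) (δ : ℝ) (hδ : δ ≠ 0) (hD : Dfun a ξ ℓ > 0)
    (A B : ℝ) (hAB : A < B) (hA : -Dfun a ξ ℓ ≤ A) (hB : B ≤ Dfun a ξ ℓ)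
    (u : ∀ n : ℕ, Fin (L n) → ℝ)
    (hu : ∀ n, 3 ≤ n → IsTopEigenvector (HdeltaSq a ξ φ δ (L n) (K n)) (u n)) :
    Tendsto (fun N : ℕ =>
        (1 / (N : ℝ)) * ∑ n ∈ Finset.Icc (ℓ + 1) (N + ℓ),
          (Set.Ioo A B).indicator (fun _ => (1 : ℝ))
            (recErr a ξ φ δ (L n) (K n) (u n) (n - 1 - ℓ) / δ))
      atTop
      (nhds (∫ x in A..B, 1 / (Real.pi * Real.sqrt (Dfun a ξ ℓ ^ 2 - x ^ 2)))) := by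
  set Z : ℂ := (Gfun a ξ : ℂ) * (C1 a ξ ℓ - Complex.I * C2 a ξ ℓ) with hZ
  have hZn : ‖Z‖ = Dfun a ξ ℓ := Z_norm a ξ ha ℓ
  have hirr : ∀ m : ℤ, m ≠ 0 → ∀ k : ℤ, (m:ℝ) * ξ ≠ k * (2 * Real.pi) := by
    intro m hm k h
    have hpi := Real.pi_pos
    have h1 : (m:ℝ) * ω = k := by
      rw [hξval] at h
      have : (2 * Real.pi) * ((m:ℝ) * ω) = (2 * Real.pi) * k := by linarith
      exact mul_left_cancel₀ (by positivity) this
    have hm' : (m:ℝ) ≠ 0 := by exact_mod_cast hm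
    apply hω
    refine ⟨(k:ℚ) / m, ?_⟩
    push_cast
    rw [← h1]
    field_simp
  have hmain := rec_asym a ξ φ δ α ha hδ hα.1 L K hLK hlim ℓ u hu
  have hlaw := arcsine_law ξ (ξ * ℓ + φ + Complex.arg Z) (Dfun a ξ ℓ) A B hirr hD hAB hA hB
    (fun m => recErr a ξ φ δ (L (m + (ℓ + 1))) (K (m + (ℓ + 1))) (u (m + (ℓ + 1))) (m + (ℓ + 1) - 1 - ℓ) / δ) (by
      refine (hmain.comp (tendsto_add_atTop_nat (ℓ + 1))).congr fun m => ?_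
      simp only [Function.comp]
      congr 1
      rw [show m + (ℓ + 1) - 1 = m + ℓ by omega, ← hZ]
      have e : Complex.exp (Complex.I * (ξ * ((m + ℓ : ℕ) : ℂ) + φ)) * Z
          = ((‖Z‖ : ℝ) : ℂ) * Complex.exp (((ξ * m + (ξ * ℓ + φ + Complex.arg Z) : ℝ) : ℂ) * Complex.I) := by
        conv_lhs => rw [← Complex.norm_mul_exp_arg_mul_I Z]
        rw [mul_left_comm, ← Complex.exp_add]
        congr 2
        push_cast
        ring
      rw [e, Complex.re_ofReal_mul, Complex.exp_ofReal_mul_I_re, hZn])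
  refine hlaw.congr fun N => ?_
  congr 1
  rw [show Finset.Icc (ℓ + 1) (N + ℓ) = Finset.Ico (0 + (ℓ + 1)) (N + (ℓ + 1)) by ext x; simp; omega,
    ← Finset.sum_Ico_add', ← Finset.range_eq_Ico]
end

section
/- There exist δ* > 0, a constant C > 0 and an integer N₀ such that for every δ with |δ| < δ*, every N ≥ N₀, every unit eigenvector u of H(δ)H(δ)ᵀ corresponding to its largest eigenvalue, and every index 0 ≤ j < N: |r_j(N, δ)| = |(𝒮(u uᵀ H(δ)))_j − a^{jT/N}| ≤ C/N. That is, in the discretization scheme the SSA reconstruction errors satisfy r_j = O(1/N) uniformly in 0 ≤ j < N for all sufficiently small δ. -/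
open Filter Matrix

/-- The discretized exponential signal `x_n = a^{nT/N}`. -/
noncomputable def xdisc (a T : ℝ) (N : ℕ) : ℕ → ℝ := fun n => a ^ ((n : ℝ) * T / (N : ℝ))

/-- The `L × K` Hankel matrix of the discretized signal. -/
noncomputable def Hd (a T : ℝ) (N L K : ℕ) : Matrix (Fin L) (Fin K) ℝ :=
  Matrix.of fun i k => xdisc a T N ((i : ℕ) + (k : ℕ))

/-- The `L × K` Hankel matrix of the harmonic noise `e_n = cos(ξ n + φ)`. -/
noncomputable def Ed (ξ φ : ℝ) (L K : ℕ) : Matrix (Fin L) (Fin K) ℝ :=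
  Matrix.of fun i k => Real.cos (ξ * (((i : ℕ) + (k : ℕ) : ℕ) : ℝ) + φ)

/-- The vector `W_M = (1, a^{T/N}, …, a^{(M-1)T/N})ᵀ`. -/
noncomputable def Wd (a T : ℝ) (N M : ℕ) : Fin M → ℝ := fun i => a ^ (((i : ℕ) : ℝ) * T / (N : ℝ))

/-- `B(δ) = δ(HEᵀ + EHᵀ) + δ²EEᵀ`. -/
noncomputable def Bmat (a T ξ φ δ : ℝ) (N L K : ℕ) : Matrix (Fin L) (Fin L) ℝ :=
  δ • (Hd a T N L K * (Ed ξ φ L K)ᵀ + Ed ξ φ L K * (Hd a T N L K)ᵀ)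
  + δ ^ 2 • (Ed ξ φ L K * (Ed ξ φ L K)ᵀ)

/-- The spectral (ℓ²-operator) norm of a matrix. -/
noncomputable def specNorm {m n : ℕ} (A : Matrix (Fin m) (Fin n) ℝ) : ℝ :=
  ‖(Matrix.toEuclideanLin A).toContinuousLinearMap‖

/-- The max-norm of a matrix: the maximum of the absolute values of its entries. -/
noncomputable def maxNorm {m n : ℕ} (A : Matrix (Fin m) (Fin n) ℝ) : ℝ :=
  ⨆ p : Fin m × Fin n, |A p.1 p.2|

lemma top_rayleigh {L K : ℕ} (M : Matrix (Fin L) (Fin K) ℝ) (μ : ℝ)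
    (h : ∀ (ν : ℝ) (v : Fin L → ℝ), v ≠ 0 → (M * Mᵀ).mulVec v = ν • v → ν ≤ μ)
    (v : Fin L → ℝ) : ∑ k, (∑ i, M i k * v i) ^ 2 ≤ μ * ∑ i, v i ^ 2 := by
  have hB : (μ • (1 : Matrix (Fin L) (Fin L) ℝ) - M * Mᵀ).IsHermitian := by
    rw [IsHermitian, conjTranspose_eq_transpose_of_trivial]; simp
  have hP : (μ • (1 : Matrix (Fin L) (Fin L) ℝ) - M * Mᵀ).PosSemidef := by
    rw [hB.posSemidef_iff_eigenvalues_nonneg]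
    intro i
    have h1 := hB.mulVec_eigenvectorBasis i
    have h2 := h (μ - hB.eigenvalues i) (hB.eigenvectorBasis i).ofLp (by
      intro h0
      have := hB.eigenvectorBasis.orthonormal.ne_zero i
      apply this
      ext j
      simpa using congrFun h0 j) (by
      rw [sub_mulVec, smul_mulVec, one_mulVec] at h1
      rw [sub_smul, ← h1]; abel)
    simp; linarith
  have h3 := hP.dotProduct_mulVec_nonneg v
  rw [sub_mulVec, smul_mulVec, one_mulVec, dotProduct_sub, ← mulVec_mulVec,
    dotProduct_mulVec _ M] at h3
  have e1 : (star v) ⬝ᵥ (μ • v) = μ * ∑ i, v i ^ 2 := by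
    simp [dotProduct, Finset.mul_sum, pow_two]
    exact Finset.sum_congr rfl fun _ _ => by ring
  have e2 : (star v ᵥ* M) ⬝ᵥ (Mᵀ *ᵥ v) = ∑ k, (∑ i, M i k * v i) ^ 2 := by
    simp [dotProduct, vecMul, mulVec, pow_two, mul_comm]
  rw [e1, e2] at h3
  linarith

lemma trig_sum (ξ ψ ρ A : ℝ) (hs : 0 < Real.sin ξ) (hρ : 1 ≤ ρ) (M : ℕ) (hA : ρ ^ M ≤ A) :
    |∑ i : Fin M, ρ ^ (i : ℕ) * Real.cos (ξ * (i : ℕ) + ψ)| ≤ (A + 1) / Real.sin ξ := by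
  set z : ℂ := ρ * Complex.exp (ξ * Complex.I) with hz
  have e : ∑ i : Fin M, ρ ^ (i : ℕ) * Real.cos (ξ * (i : ℕ) + ψ)
      = (Complex.exp (ψ * Complex.I) * ∑ i ∈ Finset.range M, z ^ i).re := by
    rw [Finset.mul_sum, Complex.re_sum, Finset.sum_range]
    refine Finset.sum_congr rfl fun i _ => ?_
    have : Complex.exp (ψ * Complex.I) * z ^ (i : ℕ)
        = ((ρ ^ (i : ℕ) : ℝ) : ℂ) * Complex.exp ((ξ * (i : ℕ) + ψ : ℝ) * Complex.I) := by
      rw [hz, mul_pow, ← Complex.exp_nat_mul]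
      push_cast
      rw [mul_left_comm, ← Complex.exp_add]
      congr 2; ring
    rw [this, Complex.re_ofReal_mul, Complex.exp_ofReal_mul_I_re]
  have him : z.im = ρ * Real.sin ξ := by
    rw [hz, Complex.im_ofReal_mul, Complex.exp_ofReal_mul_I_im]
  have hn : ‖z‖ = ρ := by
    rw [hz, norm_mul, Complex.norm_exp_ofReal_mul_I, Complex.norm_real, mul_one,
      Real.norm_of_nonneg (by linarith)]
  have h1 : Real.sin ξ ≤ ‖z - 1‖ := by
    have := Complex.abs_im_le_norm (z - 1)
    have h2 : (z - 1).im = ρ * Real.sin ξ := by simp [him]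
    rw [h2] at this
    have := le_abs_self (ρ * Real.sin ξ)
    nlinarith
  have h2 : ‖∑ i ∈ Finset.range M, z ^ i‖ * ‖z - 1‖ ≤ A + 1 := by
    rw [← norm_mul, geom_sum_mul]
    refine (norm_sub_le _ _).trans ?_
    rw [norm_pow, hn, norm_one]; linarith
  rw [e, le_div_iff₀ hs]
  refine le_trans ?_ h2
  gcongr
  refine (Complex.abs_re_le_norm _).trans ?_
  rw [norm_mul, Complex.norm_exp_ofReal_mul_I, one_mul]

lemma lin3 {n : ℕ} (f g1 g2 g3 y : Fin n → ℝ) (x δ p1 p2 : ℝ)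
    (hy : ∀ k, y k = x * g1 k + δ * (p1 * g2 k + p2 * g3 k)) :
    ∑ k, f k * y k = x * ∑ k, f k * g1 k
      + δ * (p1 * ∑ k, f k * g2 k + p2 * ∑ k, f k * g3 k) := by
  simp only [hy, Finset.mul_sum, ← Finset.sum_add_distrib]
  exact Finset.sum_congr rfl fun _ _ => by ring

lemma sum_bound {n : ℕ} (f g : Fin n → ℝ) (hf : ∀ i, |f i| ≤ 1) (hg : ∀ i, |g i| ≤ 1) :
    |∑ i, f i * g i| ≤ n := by
  refine (Finset.abs_sum_le_sum_abs _ _).trans ?_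
  have : ∑ i : Fin n, |f i * g i| ≤ ∑ i : Fin n, (1 : ℝ) :=
    Finset.sum_le_sum fun i _ => by
      rw [abs_mul]; exact mul_le_one₀ (hf i) (abs_nonneg _) (hg i)
  simpa using this

lemma two_bound {x y a b R : ℝ} (hx : |a| ≤ R) (hy : |b| ≤ R) :
    |x * a + y * b| ≤ (|x| + |y|) * R := by
  refine (abs_add_le _ _).trans ?_
  rw [abs_mul, abs_mul, add_mul]
  gcongr

set_option maxHeartbeats 1000000 in
/-- The final numerical estimate. -/
lemma numeric {A B c n r δ μ s t p1 p2 q1 q2 P Q D : ℝ} (hA : 1 ≤ A) (hB : 0 ≤ B) (hc : 0 < c)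
    (hn : 1 ≤ n) (hr : 1 ≤ r) (hrn : r * r = n) (hμ : c * n ^ 2 ≤ μ)
    (hD : D = |δ|) (hD1 : D ≤ 1) (hD2 : D * (2 * B ^ 2) ≤ c / 4) (hD3 : 16 * D ^ 2 ≤ c)
    (hP : P = |p1| + |p2|) (hQ : Q = |q1| + |q2|)
    (h1 : μ * P ≤ 2 * B * |t| + 2 * D * n * Q)
    (h2 : Q ≤ 2 * B * |s| + 2 * D * n * P)
    (h3 : |t| ≤ A ^ 2 * n * |s| + B * D * P)
    (h4 : |s| ≤ A * r)
    (h5 : μ = t * s + δ * (q1 * p1 + q2 * p2))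
    {wi vk c1 c2 d1 d2 ui yk : ℝ} (hw : |wi| ≤ A) (hv : |vk| ≤ A)
    (hc1 : |c1| ≤ 1) (hc2 : |c2| ≤ 1) (hd1 : |d1| ≤ 1) (hd2 : |d2| ≤ 1)
    (hu : μ * ui = t * wi + δ * (q1 * c1 + q2 * c2))
    (hy : yk = s * vk + δ * (p1 * d1 + p2 * d2))
    {C1 C2 C3 C4 : ℝ} (hC1 : C1 = 2 * (2 * B * A ^ 2 + 4 * B) * A / c)
    (hC2 : C2 = 2 * B * A + 2 * C1) (hC3 : C3 = A ^ 3 + B * C1)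
    (hC4 : C4 = C2 * C1 * (A ^ 2 + 1) + C3 * C1 * A + C2 * A ^ 2) :
    |ui * yk - wi * vk| ≤ (C4 / c) / n := by
  have hP0 : 0 ≤ P := by rw [hP]; positivity
  have hQ0 : 0 ≤ Q := by rw [hQ]; positivity
  have hD0 : 0 ≤ D := by rw [hD]; positivity
  have hC10 : 0 ≤ C1 := by rw [hC1]; positivity
  have hC20 : 0 ≤ C2 := by rw [hC2]; positivity
  have hC30 : 0 ≤ C3 := by rw [hC3]; positivity
  have hn0 : 0 < n := by linarith
  have hr0 : 0 < r := by linarith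
  have hs0 := abs_nonneg s
  have hC1' : C1 * c = 2 * (2 * B * A ^ 2 + 4 * B) * A := by rw [hC1]; field_simp
  have hPr : P * r ≤ C1 := by
    have k1 : μ * P ≤ (2 * B * A ^ 2 + 4 * B) * n * |s| + (2 * B ^ 2 * D + 4 * D ^ 2 * n ^ 2) * P := by
      have a1 : 2 * B * |t| ≤ 2 * B * (A ^ 2 * n * |s| + B * D * P) := by gcongr
      have a2 : 2 * D * n * Q ≤ 2 * D * n * (2 * B * |s| + 2 * D * n * P) := by gcongr
      have a3 : D * (4 * n * B * |s|) ≤ 1 * (4 * n * B * |s|) := by gcongr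
      linarith
    have k2 : 2 * B ^ 2 * D + 4 * D ^ 2 * n ^ 2 ≤ c / 2 * n ^ 2 := by
      have a0 : (1 : ℝ) ≤ n ^ 2 := one_le_pow₀ hn
      have a1 : c / 4 ≤ c / 4 * n ^ 2 := le_mul_of_one_le_right (by positivity) a0
      have a2 : 16 * D ^ 2 * n ^ 2 ≤ c * n ^ 2 := by gcongr
      linarith
    have k3 : c / 2 * n ^ 2 * P ≤ (2 * B * A ^ 2 + 4 * B) * n * (A * r) := by
      have b1 : c * n ^ 2 * P ≤ μ * P := by gcongr
      have b2 := mul_le_mul_of_nonneg_right k2 hP0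
      have b3 : (2 * B * A ^ 2 + 4 * B) * n * |s| ≤ (2 * B * A ^ 2 + 4 * B) * n * (A * r) := by
        gcongr
      linarith
    have k4 : c / 2 * n ^ 2 * (P * r) ≤ c / 2 * n ^ 2 * C1 := by
      have := mul_le_mul_of_nonneg_right k3 hr0.le
      have e : (2 * B * A ^ 2 + 4 * B) * n * (A * r) * r = c / 2 * n ^ 2 * C1 := by
        have : c / 2 * n ^ 2 * C1 = n ^ 2 / 2 * (C1 * c) := by ring
        rw [this, hC1', ← hrn]; ring
      linarith
    exact le_of_mul_le_mul_left k4 (by positivity)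
  have hQr : Q ≤ C2 * r := by
    have a1 : D * (2 * n * P) ≤ 1 * (2 * n * P) := by gcongr
    have a2 : 2 * B * |s| ≤ 2 * B * (A * r) := by gcongr
    have a3 : n * P ≤ C1 * r := by
      rw [← hrn]
      have := mul_le_mul_of_nonneg_right hPr hr0.le
      linarith
    rw [hC2]; linarith
  have htn : |t| ≤ C3 * (n * r) := by
    have a1 : A ^ 2 * n * |s| ≤ A ^ 2 * n * (A * r) := by gcongr
    have a2 : P ≤ C1 * (n * r) := by
      have b1 : P ≤ P * r := le_mul_of_one_le_right hP0 hr
      have b2 : C1 * 1 ≤ C1 * (n * r) := by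
        gcongr; exact one_le_mul_of_one_le_of_one_le hn hr
      linarith
    have a3 : D * (B * P) ≤ 1 * (B * P) := by gcongr
    have a4 : B * P ≤ B * (C1 * (n * r)) := by gcongr
    rw [hC3]; linarith
  have hQP : Q * P ≤ C2 * C1 * n := by
    have a1 : Q * P ≤ C2 * r * P := by gcongr
    have a2 : C2 * (P * r) ≤ C2 * C1 := by gcongr
    have a3 : C2 * C1 * 1 ≤ C2 * C1 * n := by gcongr
    linarith
  have htP : |t| * P ≤ C3 * C1 * n := by
    have a1 : |t| * P ≤ C3 * (n * r) * P := by gcongr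
    have a2 : C3 * n * (P * r) ≤ C3 * n * C1 := by gcongr
    linarith
  have hQs : Q * |s| ≤ C2 * A * n := by
    have a1 : Q * |s| ≤ (C2 * r) * (A * r) := by gcongr
    rw [← hrn]; linarith
  -- the numerator
  set qc := q1 * c1 + q2 * c2 with hqc
  set pd := p1 * d1 + p2 * d2 with hpd
  set qp := q1 * p1 + q2 * p2 with hqp
  have bqc : |qc| ≤ Q := by
    have := two_bound (x := q1) (y := q2) hc1 hc2
    rw [hQ]; linarith
  have bpd : |pd| ≤ P := by
    have := two_bound (x := p1) (y := p2) hd1 hd2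
    rw [hP]; linarith
  have bqp : |qp| ≤ Q * P := by
    have := two_bound (x := q1) (y := q2) (a := p1) (b := p2) (R := P)
      (by rw [hP]; linarith [abs_nonneg p2]) (by rw [hP]; linarith [abs_nonneg p1])
    rw [hQ]; exact this
  have hδ : |δ| ≤ 1 := hD ▸ hD1
  have key : μ * (ui * yk - wi * vk)
      = δ * (- (qp * (wi * vk)) + t * (wi * pd) + qc * (s * vk) + δ * (qc * pd)) := by
    have : μ * (ui * yk - wi * vk) = (μ * ui) * yk - μ * (wi * vk) := by ring
    rw [this, hu, hy, h5]; ring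
  have hnum : |μ * (ui * yk - wi * vk)| ≤ C4 * n := by
    rw [key, abs_mul]
    have m1 : |qp * (wi * vk)| ≤ Q * P * (A * A) := by rw [abs_mul, abs_mul]; gcongr
    have m2 : |t * (wi * pd)| ≤ |t| * (A * P) := by rw [abs_mul, abs_mul]; gcongr
    have m3 : |qc * (s * vk)| ≤ Q * (|s| * A) := by rw [abs_mul, abs_mul]; gcongr
    have m4 : |δ * (qc * pd)| ≤ 1 * (Q * P) := by rw [abs_mul, abs_mul]; gcongr
    have m5 : |- (qp * (wi * vk)) + t * (wi * pd) + qc * (s * vk) + δ * (qc * pd)|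
        ≤ Q * P * (A * A) + |t| * (A * P) + Q * (|s| * A) + 1 * (Q * P) := by
      refine (abs_add_le _ _).trans (add_le_add ((abs_add_le _ _).trans (add_le_add
        ((abs_add_le _ _).trans (add_le_add ?_ m2)) m3)) m4)
      rwa [abs_neg]
    have m6 : |δ| * |- (qp * (wi * vk)) + t * (wi * pd) + qc * (s * vk) + δ * (qc * pd)|
        ≤ 1 * (Q * P * (A * A) + |t| * (A * P) + Q * (|s| * A) + 1 * (Q * P)) := by gcongr
    refine m6.trans ?_
    have z1 : Q * P * (A ^ 2 + 1) ≤ C2 * C1 * n * (A ^ 2 + 1) := by gcongr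
    have z2 : |t| * P * A ≤ C3 * C1 * n * A := by gcongr
    have z3 : Q * |s| * A ≤ C2 * A * n * A := by gcongr
    rw [hC4]; linarith
  have hμ0 : 0 < μ := lt_of_lt_of_le (by positivity) hμ
  rw [abs_mul, abs_of_pos hμ0] at hnum
  rw [div_div, le_div_iff₀ (by positivity)]
  have f1 : c * n ^ 2 * |ui * yk - wi * vk| ≤ μ * |ui * yk - wi * vk| := by gcongr
  have f2 : n * (|ui * yk - wi * vk| * (c * n)) ≤ n * C4 := by linarith
  exact le_of_mul_le_mul_left f2 hn0

set_option maxHeartbeats 1000000 in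
lemma entry_bound {L K : ℕ} (M : Matrix (Fin L) (Fin K) ℝ) (w c1 c2 : Fin L → ℝ)
    (v d1 d2 : Fin K → ℝ) {δ A B n c : ℝ}
    (hM : ∀ i k, M i k = w i * v k + δ * (c1 i * d1 k + c2 i * d2 k))
    (hA : 1 ≤ A) (hB : 0 ≤ B) (hc : 0 < c) (hn : 1 ≤ n)
    (hw1 : ∀ i, 1 ≤ w i) (hwA : ∀ i, w i ≤ A) (hv1 : ∀ i, 1 ≤ v i) (hvA : ∀ i, v i ≤ A)
    (hc1 : ∀ i, |c1 i| ≤ 1) (hc2 : ∀ i, |c2 i| ≤ 1)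
    (hd1 : ∀ i, |d1 i| ≤ 1) (hd2 : ∀ i, |d2 i| ≤ 1)
    (hwc1 : |∑ i, w i * c1 i| ≤ B) (hwc2 : |∑ i, w i * c2 i| ≤ B)
    (hvd1 : |∑ i, v i * d1 i| ≤ B) (hvd2 : |∑ i, v i * d2 i| ≤ B)
    (hL : (L : ℝ) ≤ n) (hK : (K : ℝ) ≤ n) (hLK : c * n ^ 2 ≤ L * K / 4)
    (hD1 : |δ| ≤ 1) (hD2 : |δ| * (2 * B ^ 2) ≤ c / 4) (hD3 : 16 * |δ| ^ 2 ≤ c)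
    (u : Fin L → ℝ) (hu : IsTopEigenvector (M * Mᵀ) u)
    {C1 C2 C3 C4 : ℝ} (hC1 : C1 = 2 * (2 * B * A ^ 2 + 4 * B) * A / c)
    (hC2 : C2 = 2 * B * A + 2 * C1) (hC3 : C3 = A ^ 3 + B * C1)
    (hC4 : C4 = C2 * C1 * (A ^ 2 + 1) + C3 * C1 * A + C2 * A ^ 2) (i : Fin L) (k : Fin K) :
    |u i * (∑ i', u i' * M i' k) - w i * v k| ≤ (C4 / c) / n := by
  obtain ⟨hu1, μ, heig, htop⟩ := hu
  have hray := top_rayleigh M μ htop w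
  have hLn : (0 : ℝ) ≤ L := Nat.cast_nonneg _
  have hKn : (0 : ℝ) ≤ K := Nat.cast_nonneg _
  have hn0 : 0 < n := by linarith
  -- squares
  have sqW1 : (L : ℝ) ≤ ∑ i, w i ^ 2 := by
    have : ∑ i : Fin L, (1 : ℝ) ≤ ∑ i, w i ^ 2 :=
      Finset.sum_le_sum fun i _ => one_le_pow₀ (hw1 i)
    simpa using this
  have sqV1 : (K : ℝ) ≤ ∑ i, v i ^ 2 := by
    have : ∑ i : Fin K, (1 : ℝ) ≤ ∑ i, v i ^ 2 :=
      Finset.sum_le_sum fun i _ => one_le_pow₀ (hv1 i)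
    simpa using this
  have sqWA : ∑ i, w i ^ 2 ≤ A ^ 2 * n := by
    have : ∑ i, w i ^ 2 ≤ ∑ i : Fin L, A ^ 2 :=
      Finset.sum_le_sum fun i _ => pow_le_pow_left₀ (by linarith [hw1 i]) (hwA i) 2
    simp only [Finset.sum_const, Finset.card_univ, Fintype.card_fin, nsmul_eq_mul] at this
    exact this.trans (by rw [mul_comm]; gcongr)
  have sqVA : ∑ i, v i ^ 2 ≤ A ^ 2 * n := by
    have : ∑ i, v i ^ 2 ≤ ∑ i : Fin K, A ^ 2 :=
      Finset.sum_le_sum fun i _ => pow_le_pow_left₀ (by linarith [hv1 i]) (hvA i) 2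
    simp only [Finset.sum_const, Finset.card_univ, Fintype.card_fin, nsmul_eq_mul] at this
    exact this.trans (by rw [mul_comm]; gcongr)
  have hμ : c * n ^ 2 ≤ μ := by
    have hg : ∀ k, (∑ i, M i k * w i) = (∑ i, w i ^ 2) * v k
        + δ * ((∑ i, w i * c1 i) * d1 k + (∑ i, w i * c2 i) * d2 k) := by
      intro k
      have := lin3 w w c1 c2 (fun i => M i k) (v k) δ (d1 k) (d2 k)
        (fun i => by rw [hM]; ring)
      rw [Finset.sum_congr rfl fun i _ => mul_comm (M i k) (w i), this]
      simp only [pow_two]; ring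
    have hG := lin3 v v d1 d2 _ _ δ _ _ hg
    have hCS := Finset.sum_mul_sq_le_sq_mul_sq Finset.univ v (fun k => ∑ i, M i k * w i)
    rw [hG] at hCS
    simp only [← pow_two] at hCS
    set SW := ∑ i, w i ^ 2
    set SV := ∑ i, v i ^ 2
    set X := (∑ i, w i * c1 i) * (∑ i, v i * d1 i) + (∑ i, w i * c2 i) * (∑ i, v i * d2 i) with hX
    have hXB : |X| ≤ 2 * B ^ 2 := by
      refine (two_bound hvd1 hvd2).trans ?_
      have : (|∑ i, w i * c1 i| + |∑ i, w i * c2 i|) * B ≤ (B + B) * B := by gcongr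
      linarith
    have hδX : |δ * X| ≤ c / 4 := by
      rw [abs_mul]
      refine le_trans ?_ hD2
      gcongr
    have hLK2 : (L : ℝ) * K ≤ SW * SV := mul_le_mul sqW1 sqV1 hKn (by linarith)
    have hn2 : (1 : ℝ) ≤ n ^ 2 := one_le_pow₀ hn
    have hcn : c ≤ c * n ^ 2 := le_mul_of_one_le_right hc.le hn2
    have hY : SW * SV / 2 ≤ SW * SV + δ * X := by
      have := neg_abs_le (δ * X)
      linarith
    have hY0 : 0 < SW * SV := by linarith
    have hsq : (SW * SV / 2) ^ 2 ≤ (SW * SV + δ * X) ^ 2 :=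
      pow_le_pow_left₀ (by linarith) hY 2
    have hSV0 : 0 ≤ SV := by linarith
    have h3 : SV * ∑ k, (∑ i, M i k * w i) ^ 2 ≤ SV * (μ * SW) := by gcongr
    have h4 : (SW * SV) * (SW * SV / 4) ≤ (SW * SV) * μ := by
      linarith
    have := le_of_mul_le_mul_left h4 hY0
    linarith
  -- the structure equations
  set y : Fin K → ℝ := fun k => ∑ i', u i' * M i' k with hy
  have hyk : ∀ k, y k = (∑ i, w i * u i) * v k
      + δ * ((∑ i, c1 i * u i) * d1 k + (∑ i, c2 i * u i) * d2 k) := by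
    intro k
    have := lin3 u w c1 c2 (fun i => M i k) (v k) δ (d1 k) (d2 k)
        (fun i => by rw [hM]; ring)
    rw [hy]
    simp only [this]
    simp only [mul_comm (u _)]; ring
  have hui : ∀ i, μ * u i = (∑ k, v k * y k) * w i
      + δ * ((∑ k, d1 k * y k) * c1 i + (∑ k, d2 k * y k) * c2 i) := by
    intro i
    have h0 := congrFun heig i
    rw [← mulVec_mulVec] at h0
    have h1 : Mᵀ *ᵥ u = y := by
      ext k; simp [mulVec, dotProduct, hy, mul_comm]
    rw [h1] at h0
    have := lin3 y v d1 d2 (fun k => M i k) (w i) δ (c1 i) (c2 i)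
        (fun k => by rw [hM])
    simp only [Pi.smul_apply, smul_eq_mul] at h0
    rw [← h0]
    simp only [mulVec, dotProduct, mul_comm (M _ _), this]
    simp only [mul_comm (y _)]; ring
  have et := lin3 v v d1 d2 y _ δ _ _ hyk
  have eq1 := lin3 d1 v d1 d2 y _ δ _ _ hyk
  have eq2 := lin3 d2 v d1 d2 y _ δ _ _ hyk
  have ep1 := lin3 c1 w c1 c2 (fun i => μ * u i) _ δ _ _ hui
  have ep2 := lin3 c2 w c1 c2 (fun i => μ * u i) _ δ _ _ hui
  have eμ := lin3 u w c1 c2 (fun i => μ * u i) _ δ _ _ hui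
  have hs2 := Finset.sum_mul_sq_le_sq_mul_sq Finset.univ w u
  have hu1' : ∑ i, u i ^ 2 = 1 := hu1
  have eμ' : ∑ i, u i * (μ * u i) = μ := by
    have : ∑ i, u i * (μ * u i) = μ * ∑ i, u i ^ 2 := by
      rw [Finset.mul_sum]; exact Finset.sum_congr rfl fun _ _ => by ring
    rw [this, hu1', mul_one]
  rw [eμ'] at eμ
  have ec (f : Fin L → ℝ) : ∑ i, f i * (μ * u i) = μ * ∑ i, f i * u i := by
    rw [Finset.mul_sum]; exact Finset.sum_congr rfl fun _ _ => by ring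
  rw [ec] at ep1 ep2
  have eu (f : Fin L → ℝ) : ∑ i, u i * f i = ∑ i, f i * u i :=
    Finset.sum_congr rfl fun _ _ => mul_comm _ _
  rw [eu w, eu c1, eu c2] at eμ
  have b11 := (sum_bound c1 c1 hc1 hc1).trans hL
  have b12 := (sum_bound c1 c2 hc1 hc2).trans hL
  have b21 := (sum_bound c2 c1 hc2 hc1).trans hL
  have b22 := (sum_bound c2 c2 hc2 hc2).trans hL
  have g11 := (sum_bound d1 d1 hd1 hd1).trans hK
  have g12 := (sum_bound d1 d2 hd1 hd2).trans hK
  have g21 := (sum_bound d2 d1 hd2 hd1).trans hK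
  have g22 := (sum_bound d2 d2 hd2 hd2).trans hK
  have hcw1 : |∑ i, c1 i * w i| ≤ B := by simpa only [mul_comm (c1 _)] using hwc1
  have hcw2 : |∑ i, c2 i * w i| ≤ B := by simpa only [mul_comm (c2 _)] using hwc2
  have hdv1 : |∑ i, d1 i * v i| ≤ B := by simpa only [mul_comm (d1 _)] using hvd1
  have hdv2 : |∑ i, d2 i * v i| ≤ B := by simpa only [mul_comm (d2 _)] using hvd2
  have evv : ∑ i, v i * v i = ∑ i, v i ^ 2 := by simp only [pow_two]
  rw [evv] at et
  have hui_i := hui i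
  have hyk_k := hyk k
  have hμ0 : 0 < μ := lt_of_lt_of_le (by positivity) hμ
  have gen : ∀ {m x e f g p q R S : ℝ}, m = x * e + δ * (p * f + q * g) → |e| ≤ R →
      |f| ≤ S → |g| ≤ S → |m| ≤ |x| * R + |δ| * ((|p| + |q|) * S) := by
    intro m x e f g p q R S hm he hf hg
    rw [hm]
    refine (abs_add_le _ _).trans ?_
    rw [abs_mul, abs_mul]
    gcongr
    exact two_bound hf hg
  have i1 := gen ep1 hcw1 b11 b12
  have i2 := gen ep2 hcw2 b21 b22
  have i3 := gen eq1 hdv1 g11 g12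
  have i4 := gen eq2 hdv2 g21 g22
  have i5 := gen et (R := A ^ 2 * n) ((abs_of_nonneg (by positivity)).trans_le sqVA) hvd1 hvd2
  rw [abs_mul, abs_of_pos hμ0] at i1 i2
  have hr : (1 : ℝ) ≤ √n := by rw [Real.one_le_sqrt]; exact hn
  have hrn : √n * √n = n := Real.mul_self_sqrt hn0.le
  refine numeric (A := A) (B := B) (r := √n) (δ := δ) (μ := μ) hA hB hc hn hr hrn hμ rfl
    hD1 hD2 hD3 rfl rfl (s := ∑ i, w i * u i) (t := ∑ k, v k * y k) (p1 := ∑ i, c1 i * u i)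
    (p2 := ∑ i, c2 i * u i) (q1 := ∑ k, d1 k * y k) (q2 := ∑ k, d2 k * y k)
    ?_ ?_ ?_ ?_ eμ (wi := w i) (vk := v k)
    (by rw [abs_of_nonneg (by linarith [hw1 i])]; exact hwA i)
    (by rw [abs_of_nonneg (by linarith [hv1 k])]; exact hvA k)
    (hc1 i) (hc2 i) (hd1 k) (hd2 k) hui_i hyk_k hC1 hC2 hC3 hC4
  · linarith
  · linarith
  · linarith
  · refine abs_le_of_sq_le_sq ?_ (by positivity)
    rw [hu1', mul_one] at hs2
    have : (A * √n) ^ 2 = A ^ 2 * n := by rw [mul_pow, Real.sq_sqrt hn0.le]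
    rw [this]; linarith

lemma hankelize_bound {L K : ℕ} (Y : Matrix (Fin L) (Fin K) ℝ) (j : ℕ) (hj : j + 1 < L + K)
    (hL : 0 < L) (hK : 0 < K) (x b : ℝ)
    (h : ∀ (i : Fin L) (k : Fin K), (i : ℕ) + (k : ℕ) = j → |Y i k - x| ≤ b) : |hankelize Y j - x| ≤ b := by
  unfold hankelize
  set S := ∑ i : Fin L, ∑ k : Fin K, if (i : ℕ) + (k : ℕ) = j then (1 : ℝ) else 0 with hS
  have hpos : 0 < S := by
    have hij : ∃ (i : Fin L) (k : Fin K), (i : ℕ) + (k : ℕ) = j := by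
      by_cases hjL : j < L
      · exact ⟨⟨j, hjL⟩, ⟨0, hK⟩, by simp⟩
      · exact ⟨⟨L - 1, by omega⟩, ⟨j - (L - 1), by omega⟩, by simp; omega⟩
    obtain ⟨i, k, hik⟩ := hij
    refine Finset.sum_pos' (fun i _ => Finset.sum_nonneg fun k _ => by split_ifs <;> norm_num)
      ⟨i, Finset.mem_univ _, ?_⟩
    exact Finset.sum_pos' (fun k _ => by split_ifs <;> norm_num)
      ⟨k, Finset.mem_univ _, by simp [hik]⟩
  rw [div_sub' hpos.ne', abs_div, abs_of_pos hpos, div_le_iff₀ hpos, hS, Finset.sum_mul,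
    ← Finset.sum_sub_distrib, Finset.mul_sum]
  refine (Finset.abs_sum_le_sum_abs _ _).trans (Finset.sum_le_sum fun i _ => ?_)
  rw [Finset.sum_mul, ← Finset.sum_sub_distrib, Finset.mul_sum]
  refine (Finset.abs_sum_le_sum_abs _ _).trans (Finset.sum_le_sum fun k _ => ?_)
  split_ifs with hik
  · simpa using h i k hik
  · simp

/-- in the discretization scheme, the SSA reconstruction errors
satisfy `|r_j(N, δ)| ≤ C/N` uniformly in `0 ≤ j < N` for all sufficiently
small `δ`. -/
theorem stmt_19 (a T ξ φ α : ℝ) (ha : 1 < a) (hT : 0 < T)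
    (hξ : ξ ∈ Set.Ioo 0 Real.pi) (hφ : φ ∈ Set.Ico 0 (2 * Real.pi))
    (hα : α ∈ Set.Ioo (0 : ℝ) 1)
    (L K : ℕ → ℕ)
    (hLK : ∀ N, 3 ≤ N → 1 < L N ∧ 1 < K N ∧ L N + K N = N + 1)
    (hlim : Tendsto (fun N : ℕ => (L N : ℝ) / (N : ℝ)) atTop (nhds α)) :
    ∃ δstar > (0 : ℝ), ∃ C > (0 : ℝ), ∃ N₀ : ℕ, ∀ δ : ℝ, |δ| < δstar → ∀ N, N₀ ≤ N →
      ∀ u : Fin (L N) → ℝ,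
        IsTopEigenvector
          ((Hd a T N (L N) (K N) + δ • Ed ξ φ (L N) (K N)) *
            (Hd a T N (L N) (K N) + δ • Ed ξ φ (L N) (K N))ᵀ) u →
        ∀ j, j < N →
          |hankelize (Matrix.vecMulVec u u *
              (Hd a T N (L N) (K N) + δ • Ed ξ φ (L N) (K N))) j -
            xdisc a T N j| ≤ C / (N : ℝ) := by
  have hsin : 0 < Real.sin ξ := Real.sin_pos_of_pos_of_lt_pi hξ.1 hξ.2
  obtain ⟨hα0, hα1⟩ := hα
  set A := a ^ T with hAdef
  have hA : 1 ≤ A := Real.one_le_rpow ha.le hT.le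
  set B := (A + 1) / Real.sin ξ with hBdef
  have hB : 0 ≤ B := by positivity
  set c := α * (1 - α) / 16 with hcdef
  have hc : 0 < c := by
    have : 0 < 1 - α := by linarith
    positivity
  obtain ⟨C1, hC1⟩ : ∃ C1, C1 = 2 * (2 * B * A ^ 2 + 4 * B) * A / c := ⟨_, rfl⟩
  obtain ⟨C2, hC2⟩ : ∃ C2, C2 = 2 * B * A + 2 * C1 := ⟨_, rfl⟩
  obtain ⟨C3, hC3⟩ : ∃ C3, C3 = A ^ 3 + B * C1 := ⟨_, rfl⟩
  obtain ⟨C4, hC4⟩ : ∃ C4, C4 = C2 * C1 * (A ^ 2 + 1) + C3 * C1 * A + C2 * A ^ 2 := ⟨_, rfl⟩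
  have hC10 : 0 ≤ C1 := by rw [hC1]; positivity
  have hC20 : 0 ≤ C2 := by rw [hC2]; positivity
  have hC30 : 0 ≤ C3 := by rw [hC3]; positivity
  have hC40 : 0 ≤ C4 := by rw [hC4]; positivity
  have hlow : ∀ᶠ N : ℕ in atTop, α / 2 < (L N : ℝ) / N :=
    hlim.eventually (lt_mem_nhds (by linarith))
  have hup : ∀ᶠ N : ℕ in atTop, (L N : ℝ) / N < (1 + α) / 2 :=
    hlim.eventually (gt_mem_nhds (by linarith))
  obtain ⟨N₀, hN₀⟩ := eventually_atTop.1 ((hlow.and hup).and (eventually_ge_atTop 3))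
  refine ⟨min 1 (min (c / 16) (c / (4 * (2 * B ^ 2 + 1)))), by positivity, C4 / c + 1,
    by positivity, N₀, ?_⟩
  intro δ hδ N hN u hu j hj
  obtain ⟨⟨hl, hr⟩, hN3⟩ := hN₀ N hN
  obtain ⟨hL1, hK1, hLKN⟩ := hLK N hN3
  have hn : (1 : ℝ) ≤ N := by exact_mod_cast (by omega : 1 ≤ N)
  have hn0 : (0 : ℝ) < N := by linarith
  rw [lt_div_iff₀ hn0] at hl
  rw [div_lt_iff₀ hn0] at hr
  have hsum : (L N : ℝ) + K N = N + 1 := by exact_mod_cast hLKN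
  have hLn : (L N : ℝ) ≤ N := by exact_mod_cast (by omega : L N ≤ N)
  have hKn : (K N : ℝ) ≤ N := by exact_mod_cast (by omega : K N ≤ N)
  have hLKc : c * (N : ℝ) ^ 2 ≤ L N * K N / 4 := by
    have h1 : (1 - α) / 2 * N ≤ K N := by linarith
    have h2 : (α / 2 * N) * ((1 - α) / 2 * N) ≤ L N * K N :=
      mul_le_mul hl.le h1 (mul_nonneg (by linarith) hn0.le) (Nat.cast_nonneg _)
    rw [hcdef]; linarith
  have hD1 : |δ| ≤ 1 := hδ.le.trans (min_le_left _ _)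
  have hD3 : 16 * |δ| ^ 2 ≤ c := by
    have h1 : |δ| ≤ c / 16 := hδ.le.trans ((min_le_right _ _).trans (min_le_left _ _))
    have h2 : |δ| ^ 2 ≤ |δ| := pow_le_of_le_one (abs_nonneg _) hD1 two_ne_zero
    linarith
  have hD2 : |δ| * (2 * B ^ 2) ≤ c / 4 := by
    have h1 : |δ| ≤ c / (4 * (2 * B ^ 2 + 1)) :=
      hδ.le.trans ((min_le_right _ _).trans (min_le_right _ _))
    rw [le_div_iff₀ (by positivity)] at h1
    linarith [abs_nonneg δ]
  set ρ := a ^ (T / N) with hρdef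
  have ha0 : 0 ≤ a := by linarith
  have hρ : 1 ≤ ρ := Real.one_le_rpow ha.le (by positivity)
  have hpow : ∀ m : ℕ, xdisc a T N m = ρ ^ m := by
    intro m
    rw [xdisc, hρdef, ← Real.rpow_natCast, ← Real.rpow_mul ha0]
    congr 1; ring
  have hρN : ρ ^ N = A := by
    rw [hρdef, hAdef, ← Real.rpow_natCast, ← Real.rpow_mul ha0]
    congr 1; field_simp
  have hρA : ∀ m : ℕ, m ≤ N → ρ ^ m ≤ A := fun m hm => hρN ▸ pow_le_pow_right₀ hρ hm
  have hcs : ∀ (M : ℕ) (ψ : ℝ), M ≤ N →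
      |∑ i : Fin M, ρ ^ (i : ℕ) * Real.cos (ξ * (i : ℕ) + ψ)| ≤ B :=
    fun M ψ hM => trig_sum ξ ψ ρ A hsin hρ M (hρA M hM)
  have hsn : ∀ (M : ℕ) (ψ : ℝ), M ≤ N →
      |∑ i : Fin M, ρ ^ (i : ℕ) * Real.sin (ξ * (i : ℕ) + ψ)| ≤ B := by
    intro M ψ hM
    have := hcs M (ψ - Real.pi / 2) hM
    simpa only [← add_sub_assoc, Real.cos_sub_pi_div_two] using this
  set M := Hd a T N (L N) (K N) + δ • Ed ξ φ (L N) (K N) with hMdef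
  have hM : ∀ i k, M i k = ρ ^ (i : ℕ) * ρ ^ (k : ℕ)
      + δ * (Real.cos (ξ * (i : ℕ) + 0) * Real.cos (ξ * (k : ℕ) + φ)
        + Real.sin (ξ * (i : ℕ) + 0) * -Real.sin (ξ * (k : ℕ) + φ)) := by
    intro i k
    simp only [hMdef, Hd, Ed, Matrix.add_apply, Matrix.smul_apply, of_apply, smul_eq_mul, hpow,
      pow_add, add_zero]
    push_cast
    rw [mul_add ξ, add_assoc, Real.cos_add]
    ring
  refine hankelize_bound _ j (by omega) (by omega) (by omega) _ _ ?_
  intro i k hik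
  have hval : (Matrix.vecMulVec u u * M) i k = u i * ∑ i', u i' * M i' k := by
    simp only [Matrix.mul_apply, vecMulVec_apply, Finset.mul_sum, mul_assoc]
  rw [hval, hpow, ← hik, pow_add]
  have hL' : L N ≤ N := by omega
  have hK' : K N ≤ N := by omega
  have := entry_bound M (fun i => ρ ^ (i : ℕ)) (fun i => Real.cos (ξ * (i : ℕ) + 0))
    (fun i => Real.sin (ξ * (i : ℕ) + 0)) (fun k => ρ ^ (k : ℕ))
    (fun k => Real.cos (ξ * (k : ℕ) + φ)) (fun k => -Real.sin (ξ * (k : ℕ) + φ))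
    hM hA hB hc hn (fun i => one_le_pow₀ hρ) (fun i => hρA _ (by omega))
    (fun i => one_le_pow₀ hρ) (fun i => hρA _ (by omega))
    (fun i => Real.abs_cos_le_one _) (fun i => Real.abs_sin_le_one _)
    (fun i => Real.abs_cos_le_one _) (fun i => by rw [abs_neg]; exact Real.abs_sin_le_one _)
    (hcs _ _ hL') (hsn _ _ hL') (hcs _ _ hK')
    (by simpa only [mul_neg, Finset.sum_neg_distrib, abs_neg] using hsn _ _ hK')
    hLn hKn hLKc hD1 hD2 hD3 u hu hC1 hC2 hC3 hC4 i k
  refine this.trans ?_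
  gcongr
  linarith
end
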